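/- arXiv:2007.10530 — 4 statements merged into one kernel-verified Lean document; each statement's English description precedes it below -/
import Mathlib

section
/- Let q be any prime power, n ≥ 3, and G = Sp_{2n}(q). Let π denote the permutation character of G acting on the set of 1-dimensional subspaces of 𝔽_q^{2n}. Then for every irreducible character χ ≠ 1_G of G one has ⟨χ · conj(χ), π⟩ ≥ 2; consequently, since ⟨χ·conj(χ), 1_G⟩ = 1, the product χ·conj(χ) contains a nontrivial irreducible constituent of π. -/
open scoped BigOperators

namespace McKayGraphs

/-- The standard inner product of class functions on a finite group `G`:
`⟨φ,ψ⟩ = |G|⁻¹ Σ_{g∈G} φ(g)·conj(ψ(g))`. -/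
noncomputable def charInner {G : Type*} [Group G] (φ ψ : G → ℂ) : ℂ :=
  (Nat.card G : ℂ)⁻¹ * ∑ᶠ g, φ g * (starRingEnd ℂ) (ψ g)

/-- `χ : G → ℂ` is a character if it is the trace function of a finite-dimensional
complex representation of `G`. -/
def IsChar {G : Type*} [Group G] (χ : G → ℂ) : Prop :=
  ∃ (d : ℕ) (ρ : G →* Matrix.GeneralLinearGroup (Fin d) ℂ),
    ∀ g, χ g = Matrix.trace (ρ g : Matrix (Fin d) (Fin d) ℂ)

/-- An irreducible character of `G`: a character with `⟨χ,χ⟩ = 1`. -/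
def IsIrrChar {G : Type*} [Group G] (χ : G → ℂ) : Prop :=
  IsChar χ ∧ charInner χ χ = 1

/-- `ψ` is a constituent of `φ` if `⟨φ,ψ⟩ ≠ 0`. -/
def IsConstituent {G : Type*} [Group G] (ψ φ : G → ℂ) : Prop :=
  charInner φ ψ ≠ 0

/-- The permutation character of `Sp_{2n}(q)` acting on the set of 1-dimensional
subspaces of `𝔽_q^{2n}`: `π(g) = #{lines L : gL = L}`. -/
noncomputable def linesPermChar (F : Type*) [Field F] [Fintype F] (n : ℕ) :
    Matrix.symplecticGroup (Fin n) F → ℂ := fun g =>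
  (Nat.card {L : Submodule F ((Fin n ⊕ Fin n) → F) //
      Module.finrank F L = 1 ∧
      L.map (Matrix.mulVecLin
        (g : Matrix (Fin n ⊕ Fin n) (Fin n ⊕ Fin n) F)) = L} : ℂ)

open Matrix


section Symp
variable {F : Type} [Field F] {n : ℕ}

/-- the alternating form -/
noncomputable def bl (F : Type) [Field F] (n : ℕ) : LinearMap.BilinForm F (Fin n ⊕ Fin n → F) :=
  Matrix.toBilin' (J (Fin n) F)

lemma bl_apply (u v : Fin n ⊕ Fin n → F) : bl F n u v = u ⬝ᵥ (J (Fin n) F *ᵥ v) :=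
  Matrix.toBilin'_apply' _ _ _

lemma bl_formula (u v : Fin n ⊕ Fin n → F) :
    bl F n u v = ∑ i, (u (Sum.inr i) * v (Sum.inl i) - u (Sum.inl i) * v (Sum.inr i)) := by
  have : v = Sum.elim (v ∘ Sum.inl) (v ∘ Sum.inr) := by ext (i | i) <;> rfl
  rw [bl_apply, J, this, Matrix.fromBlocks_mulVec]
  simp [dotProduct, Finset.sum_sub_distrib, Matrix.neg_mulVec]
  ring

lemma bl_self (u : Fin n ⊕ Fin n → F) : bl F n u u = 0 := by
  rw [bl_formula]; apply Finset.sum_eq_zero; intros; ring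

lemma bl_skew (u v : Fin n ⊕ Fin n → F) : bl F n u v = - bl F n v u := by
  rw [bl_formula, bl_formula, ← Finset.sum_neg_distrib]; apply Finset.sum_congr rfl; intros; ring

lemma bl_nondeg {u : Fin n ⊕ Fin n → F} (hu : u ≠ 0) : ∃ v, bl F n u v ≠ 0 := by
  by_contra! h
  apply hu
  ext (i | i)
  · have := h (Pi.single (Sum.inr i) 1)
    rw [bl_formula] at this
    simpa [Pi.single_apply] using this
  · have := h (Pi.single (Sum.inl i) 1)
    rw [bl_formula] at this
    simpa [Pi.single_apply] using this

lemma bl_inv (g : symplecticGroup (Fin n) F) (u v : Fin n ⊕ Fin n → F) :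
    bl F n (g.1 *ᵥ u) (g.1 *ᵥ v) = bl F n u v := by
  have h := SymplecticGroup.mem_iff'.1 g.2
  rw [bl_apply, bl_apply]
  conv_rhs => rw [← h, ← Matrix.mulVec_mulVec, ← Matrix.mulVec_mulVec,
    Matrix.dotProduct_mulVec u, Matrix.vecMul_transpose]

lemma mem_of_bl {A : Matrix (Fin n ⊕ Fin n) (Fin n ⊕ Fin n) F}
    (h : ∀ u v, bl F n (A *ᵥ u) (A *ᵥ v) = bl F n u v) : A ∈ symplecticGroup (Fin n) F := by
  rw [SymplecticGroup.mem_iff']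
  apply (Matrix.toBilin' (R₁ := F)).injective
  ext i j
  have := h (Pi.single i 1) (Pi.single j 1)
  rw [bl_apply, bl_apply] at this
  simp only [LinearMap.comp_apply, LinearMap.single_apply]
  rw [Matrix.toBilin'_apply', Matrix.toBilin'_apply', ← this, ← Matrix.mulVec_mulVec,
    ← Matrix.mulVec_mulVec, Matrix.dotProduct_mulVec, Matrix.vecMul_transpose]

/-- transvection matrix -/
noncomputable def tmat (a : F) (w : Fin n ⊕ Fin n → F) : Matrix (Fin n ⊕ Fin n) (Fin n ⊕ Fin n) F :=
  1 + a • Matrix.vecMulVec w (w ᵥ* J (Fin n) F)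

lemma tmat_mulVec (a : F) (w v : Fin n ⊕ Fin n → F) :
    tmat a w *ᵥ v = v + (a * bl F n w v) • w := by
  rw [tmat, Matrix.add_mulVec, Matrix.one_mulVec, Matrix.smul_mulVec, Matrix.vecMulVec_mulVec,
    bl_apply, Matrix.dotProduct_mulVec]
  ext i
  simp only [Pi.add_apply, Pi.smul_apply, smul_eq_mul, MulOpposite.smul_eq_mul_unop,
    MulOpposite.unop_op]
  ring

/-- transvection -/
noncomputable def tv (a : F) (w : Fin n ⊕ Fin n → F) : symplecticGroup (Fin n) F :=
  ⟨tmat a w, mem_of_bl fun u v => by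
    rw [tmat_mulVec, tmat_mulVec]
    simp only [map_add, LinearMap.add_apply, map_smul, LinearMap.smul_apply, smul_eq_mul, bl_self]
    rw [bl_skew u w]; ring⟩

lemma tv_mulVec (a : F) (w v : Fin n ⊕ Fin n → F) :
    (tv a w).1 *ᵥ v = v + (a * bl F n w v) • w := tmat_mulVec a w v

lemma sp_ext {g h : symplecticGroup (Fin n) F} (H : ∀ v, g.1 *ᵥ v = h.1 *ᵥ v) : g = h := by
  apply Subtype.ext
  apply Matrix.mulVec_injective
  ext v : 1
  exact H v

lemma tv_add (a b : F) (w : Fin n ⊕ Fin n → F) : tv a w * tv b w = tv (a + b) w := by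
  apply sp_ext
  intro v
  rw [Submonoid.coe_mul, ← Matrix.mulVec_mulVec, tv_mulVec, tv_mulVec, tv_mulVec]
  simp only [map_add, map_smul, bl_self, smul_eq_mul]
  module

lemma tv_zero (w : Fin n ⊕ Fin n → F) : tv 0 w = 1 := by
  apply sp_ext; intro v; rw [tv_mulVec]; simp

lemma tv_smul (a c : F) (w : Fin n ⊕ Fin n → F) : tv a (c • w) = tv (a * c ^ 2) w := by
  apply sp_ext; intro v; rw [tv_mulVec, tv_mulVec]
  simp only [map_smul, LinearMap.smul_apply, smul_eq_mul]
  module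

lemma tv_conj (g : symplecticGroup (Fin n) F) (a : F) (w : Fin n ⊕ Fin n → F) :
    g * tv a w = tv a (g.1 *ᵥ w) * g := by
  apply sp_ext; intro v
  rw [Submonoid.coe_mul, ← Matrix.mulVec_mulVec, tv_mulVec, Submonoid.coe_mul,
    ← Matrix.mulVec_mulVec, tv_mulVec, bl_inv, Matrix.mulVec_add, Matrix.mulVec_smul]

lemma exists_both {u v : Fin n ⊕ Fin n → F} (hu : u ≠ 0) (hv : v ≠ 0) :
    ∃ w, bl F n u w ≠ 0 ∧ bl F n v w ≠ 0 := by
  obtain ⟨x, hx⟩ := bl_nondeg hu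
  obtain ⟨y, hy⟩ := bl_nondeg hv
  by_cases h1 : bl F n v x = 0
  · by_cases h2 : bl F n u y = 0
    · exact ⟨x + y, by simp [h2, hx], by simp [h1, hy]⟩
    · exact ⟨y, h2, hy⟩
  · exact ⟨x, hx, h1⟩

lemma tv_move {u v : Fin n ⊕ Fin n → F} (h : bl F n u v ≠ 0) :
    (tv (- (bl F n u v)⁻¹) (v - u)).1 *ᵥ u = v := by
  rw [tv_mulVec]
  simp only [map_sub, LinearMap.sub_apply, bl_self, sub_zero]
  rw [bl_skew v u, neg_mul_neg, inv_mul_cancel₀ h]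
  simp

lemma sp_trans {u v : Fin n ⊕ Fin n → F} (hu : u ≠ 0) (hv : v ≠ 0) :
    ∃ g : symplecticGroup (Fin n) F, g.1 *ᵥ u = v := by
  obtain ⟨w, h1, h2⟩ := exists_both hu hv
  have h3 : bl F n w v ≠ 0 := by rw [bl_skew]; simpa using h2
  refine ⟨tv (- (bl F n w v)⁻¹) (v - w) * tv (- (bl F n u w)⁻¹) (w - u), ?_⟩
  rw [Submonoid.coe_mul, ← Matrix.mulVec_mulVec, tv_move h1, tv_move h3]

/-- fixed space -/
noncomputable def fixsp (g : symplecticGroup (Fin n) F) : Submodule F (Fin n ⊕ Fin n → F) :=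
  LinearMap.ker (Matrix.mulVecLin g.1 - LinearMap.id)

lemma mem_fixsp (g : symplecticGroup (Fin n) F) (v) : v ∈ fixsp g ↔ g.1 *ᵥ v = v := by
  simp [fixsp, sub_eq_zero]

lemma sp_step (g : symplecticGroup (Fin n) F) (u) (h : bl F n u (g.1 *ᵥ u) ≠ 0) :
    ∃ a w, fixsp g < fixsp (tv a w * g) := by
  have h' : bl F n (g.1 *ᵥ u) u ≠ 0 := by rw [bl_skew]; simpa using h
  refine ⟨- (bl F n (g.1 *ᵥ u) u)⁻¹, u - g.1 *ᵥ u, ?_⟩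
  rw [SetLike.lt_iff_le_and_exists]
  constructor
  · intro x hx
    rw [mem_fixsp] at hx ⊢
    rw [Submonoid.coe_mul, ← Matrix.mulVec_mulVec, hx, tv_mulVec]
    have : bl F n (g.1 *ᵥ u) x = bl F n u x := by
      conv_lhs => rw [← hx]
      exact bl_inv g u x
    simp [this]
  · refine ⟨u, ?_, ?_⟩
    · rw [mem_fixsp, Submonoid.coe_mul, ← Matrix.mulVec_mulVec, tv_move h']
    · rw [mem_fixsp]
      intro h2
      rw [h2, bl_self] at h
      exact h rfl

lemma sp_gen (K : Subgroup (symplecticGroup (Fin n) F)) (hK : ∀ a w, tv a w ∈ K) (m : ℕ) :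
    ∀ g : symplecticGroup (Fin n) F,
      Module.finrank F (Fin n ⊕ Fin n → F) ≤ Module.finrank F (fixsp g) + m → g ∈ K := by
  induction m with
  | zero =>
    intro g hg
    have : fixsp g = ⊤ := Submodule.eq_top_of_finrank_eq
      (le_antisymm (Submodule.finrank_le _) (by simpa using hg))
    have : g = 1 := sp_ext fun v => by
      have hv : v ∈ fixsp g := by rw [this]; trivial
      rw [mem_fixsp] at hv
      simp [hv]
    rw [this]; exact K.one_mem
  | succ m ih =>
    intro g hg
    by_cases hg1 : g = 1
    · rw [hg1]; exact K.one_mem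
    have key : ∀ g' : symplecticGroup (Fin n) F, fixsp g ≤ fixsp g' →
        (∃ u, bl F n u (g'.1 *ᵥ u) ≠ 0) → g' ∈ K := by
      rintro g' hle ⟨u, hu⟩
      obtain ⟨a, w, hlt⟩ := sp_step g' u hu
      have h1 := Submodule.finrank_lt_finrank_of_lt hlt
      have h2 := Submodule.finrank_mono hle
      have := ih (tv a w * g') (by omega)
      exact (K.mul_mem_cancel_left (hK a w)).1 this
    by_cases h : ∃ u, bl F n u (g.1 *ᵥ u) ≠ 0
    · exact key g le_rfl h
    push Not at h
    obtain ⟨y, hy⟩ : ∃ y, g.1 *ᵥ y ≠ y := by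
      by_contra! h'
      exact hg1 (sp_ext fun v => by simp [h' v])
    set w := g.1 *ᵥ y - y with hw
    have hw0 : w ≠ 0 := sub_ne_zero.2 hy
    have hgw : (g⁻¹).1 *ᵥ w ≠ 0 := by
      intro h0
      apply hw0
      have : g.1 *ᵥ ((g⁻¹).1 *ᵥ w) = w := by
        rw [Matrix.mulVec_mulVec, ← Submonoid.coe_mul, mul_inv_cancel]; simp
      rw [← this, h0, Matrix.mulVec_zero]
    obtain ⟨u, hu1, hu2⟩ := exists_both hw0 hgw
    have hu3 : bl F n w (g.1 *ᵥ u) ≠ 0 := by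
      rw [← bl_inv g, Matrix.mulVec_mulVec, ← Submonoid.coe_mul, mul_inv_cancel] at hu2
      simpa using hu2
    refine (K.mul_mem_cancel_left (hK 1 w)).1 (key (tv 1 w * g) ?_ ⟨u, ?_⟩)
    · intro x hx
      rw [mem_fixsp] at hx ⊢
      rw [Submonoid.coe_mul, ← Matrix.mulVec_mulVec, hx, tv_mulVec]
      have : bl F n (g.1 *ᵥ y) x = bl F n y x := by
        conv_lhs => rw [← hx]
        exact bl_inv g y x
      simp [hw, this]
    · rw [Submonoid.coe_mul, ← Matrix.mulVec_mulVec, tv_mulVec, map_add, h u, map_smul, bl_skew u w]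
      simp [hu1, hu3]

lemma sp_gen' (K : Subgroup (symplecticGroup (Fin n) F)) (hK : ∀ a w, tv a w ∈ K) (g) : g ∈ K :=
  sp_gen K hK (Module.finrank F (Fin n ⊕ Fin n → F)) g (by omega)

end Symp


section Eig
set_option linter.unusedSectionVars false

lemma exists_eigen {A V : Type*} [AddCommGroup A] [Fintype A] [AddCommGroup V] [Module ℂ V]
    (σ : A → V →ₗ[ℂ] V) (h0 : σ 0 = 1) (hadd : ∀ a b, σ (a + b) = σ a * σ b) (v : V) (hv : v ≠ 0) :
    ∃ (l : AddChar A ℂ) (w : V), w ≠ 0 ∧ ∀ a, σ a w = l a • w := by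
  classical
  let p : AddChar A ℂ → V := fun l => ∑ a, l (-a) • σ a v
  have hsum : ∑ l, p l = (Fintype.card A : ℂ) • v := by
    simp only [p]
    rw [Finset.sum_comm]
    simp_rw [← Finset.sum_smul, AddChar.sum_apply_eq_ite]
    simp [h0]
  obtain ⟨l, hl⟩ : ∃ l, p l ≠ 0 := by
    by_contra! h
    simp only [h, Finset.sum_const_zero] at hsum
    have := smul_eq_zero.1 hsum.symm
    simp [hv] at this
  refine ⟨l, p l, hl, fun b => ?_⟩
  simp only [p]
  rw [map_sum, Finset.smul_sum]
  refine Fintype.sum_equiv (Equiv.addLeft b) _ _ fun a => ?_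
  simp only [Equiv.coe_addLeft, map_smul, hadd, smul_smul, Module.End.mul_apply]
  rw [← AddChar.map_add_eq_mul]
  congr 2
  abel

lemma exists_shift {F : Type} [Field F] [Fintype F] : ∃ ψ : AddChar F ℂ,
    Function.Surjective (fun a : F => ψ.mulShift a) := by
  classical
  obtain ⟨ψ, hψ⟩ : ∃ ψ : AddChar F ℂ, ψ ≠ 1 := by
    have : 1 < Fintype.card (AddChar F ℂ) := by rw [AddChar.card_eq]; exact Fintype.one_lt_card
    exact Fintype.exists_ne_of_one_lt_card this 1
  refine ⟨ψ, ?_⟩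
  have hi := AddChar.to_mulShift_inj_of_isPrimitive (AddChar.IsPrimitive.of_ne_one hψ)
  exact ((Fintype.bijective_iff_injective_and_card _).2 ⟨hi, AddChar.card_eq.symm⟩).2

variable {F : Type} [Field F] [Fintype F] {n : ℕ}

lemma addChar_sum {A ι : Type*} [AddCommGroup A] (l : AddChar A ℂ) (s : Finset ι) (f : ι → A) :
    l (∑ i ∈ s, f i) = ∏ i ∈ s, l (f i) := by
  classical
  induction s using Finset.induction_on with
  | empty => simp
  | insert a s ha ih => rw [Finset.sum_insert ha, Finset.prod_insert ha, AddChar.map_add_eq_mul, ih]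

lemma addChar_matrix (l : AddChar (Matrix (Fin n) (Fin n) F) ℂ) :
    ∃ (ψ : AddChar F ℂ) (b : Fin n → Fin n → F), ∀ c : Matrix (Fin n) (Fin n) F,
      l c = ψ (∑ i, ∑ j, b i j * c i j) := by
  obtain ⟨ψ, hψ⟩ := exists_shift (F := F)
  have : ∀ i j, ∃ b : F, ∀ x, l (Matrix.single i j x) = ψ (b * x) := by
    intro i j
    obtain ⟨b, hb⟩ := hψ (l.compAddMonoidHom (Matrix.singleAddMonoidHom i j))
    refine ⟨b, fun x => ?_⟩
    have := DFunLike.congr_fun hb x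
    simpa using this.symm
  choose b hb using this
  refine ⟨ψ, b, fun c => ?_⟩
  conv_lhs => rw [Matrix.matrix_eq_sum_single c]
  simp only [addChar_sum, hb]

lemma exists_zero_quad (hn : 3 ≤ n) (b : Fin n → Fin n → F) :
    ∃ x : Fin n → F, x ≠ 0 ∧ ∑ i, ∑ j, b i j * (x i * x j) = 0 := by
  classical
  let f : MvPolynomial (Fin n) F :=
    ∑ i, ∑ j, MvPolynomial.C (b i j) * (MvPolynomial.X i * MvPolynomial.X j)
  have hdeg : f.totalDegree < Fintype.card (Fin n) := by
    rw [Fintype.card_fin]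
    refine lt_of_le_of_lt (b := 2) ?_ (by omega)
    refine MvPolynomial.totalDegree_finsetSum_le fun i _ => ?_
    refine MvPolynomial.totalDegree_finsetSum_le fun j _ => ?_
    refine (MvPolynomial.totalDegree_mul _ _).trans ?_
    rw [MvPolynomial.totalDegree_C, zero_add]
    refine (MvPolynomial.totalDegree_mul _ _).trans ?_
    rw [MvPolynomial.totalDegree_X, MvPolynomial.totalDegree_X]
  obtain ⟨p, hp⟩ := CharP.exists F
  have hpp : p.Prime := CharP.char_is_prime F p
  have hd := char_dvd_card_solutions p hdeg
  have h0 : MvPolynomial.eval (0 : Fin n → F) f = 0 := by simp [f]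
  have hpos : 0 < Fintype.card { x : Fin n → F // MvPolynomial.eval x f = 0 } :=
    Fintype.card_pos_iff.2 ⟨⟨0, h0⟩⟩
  have h1 : 1 < Fintype.card { x : Fin n → F // MvPolynomial.eval x f = 0 } :=
    lt_of_lt_of_le hpp.one_lt (Nat.le_of_dvd hpos hd)
  obtain ⟨⟨x, hx⟩, hne⟩ := Fintype.exists_ne_of_one_lt_card h1 ⟨0, h0⟩
  refine ⟨x, fun h => hne (Subtype.ext h), ?_⟩
  simpa [f] using hx

/-- symmetrization -/
def symm (c : Matrix (Fin n) (Fin n) F) : Matrix (Fin n) (Fin n) F :=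
  Matrix.of fun i j => c (min i j) (max i j)

lemma symm_transpose (c : Matrix (Fin n) (Fin n) F) : (symm c)ᵀ = symm c := by
  ext i j; simp [symm, min_comm, max_comm]

/-- Siegel unipotent -/
def siegel (c : Matrix (Fin n) (Fin n) F) : symplecticGroup (Fin n) F :=
  ⟨Matrix.fromBlocks 1 (symm c) 0 1, by
    rw [SymplecticGroup.fromBlocks_mem_iff]; simp [symm_transpose]⟩

lemma siegel_add (c d : Matrix (Fin n) (Fin n) F) : siegel (c + d) = siegel c * siegel d := by
  apply Subtype.ext
  simp only [siegel, Submonoid.coe_mul, Matrix.fromBlocks_multiply]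
  have : symm (c + d) = symm d + symm c := by ext; simp [symm, add_comm]
  simp [this]

lemma siegel_zero : siegel (0 : Matrix (Fin n) (Fin n) F) = 1 := by
  apply Subtype.ext
  have : symm (0 : Matrix (Fin n) (Fin n) F) = 0 := by ext; simp [symm]
  simp [siegel, this]

lemma siegel_tv (a : F) (x : Fin n → F) :
    siegel (Matrix.of fun i j => a * (x i * x j)) = tv (-a) (Sum.elim x 0) := by
  apply Subtype.ext
  ext (i | i) (j | j)
  · simp [siegel, tv, tmat, J, Matrix.vecMulVec_apply, Matrix.vecMul_fromBlocks, Matrix.one_apply]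
  · simp [siegel, tv, tmat, J, Matrix.vecMulVec_apply, Matrix.vecMul_fromBlocks, symm,
      Matrix.vecMul_neg]
    left
    rcases le_total i j with h | h <;> simp [h, mul_comm]
  · simp [siegel, tv, tmat, J, Matrix.vecMulVec_apply, Matrix.vecMul_fromBlocks]
  · simp [siegel, tv, tmat, J, Matrix.vecMulVec_apply, Matrix.vecMul_fromBlocks, Matrix.one_apply]

lemma exists_fixed (hn : 3 ≤ n) {V : Type*} [AddCommGroup V] [Module ℂ V] [Nontrivial V]
    (ρ : Representation ℂ (symplecticGroup (Fin n) F) V) :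
    ∃ (w : Fin n ⊕ Fin n → F) (v : V), w ≠ 0 ∧ v ≠ 0 ∧ ∀ a, ρ (tv a w) v = v := by
  obtain ⟨v0, hv0⟩ := exists_ne (0 : V)
  obtain ⟨l, v, hv, hl⟩ := exists_eigen (fun c : Matrix (Fin n) (Fin n) F => ρ (siegel c))
    (by simp [siegel_zero]) (fun a b => by simp [siegel_add]) v0 hv0
  obtain ⟨ψ, b, hb⟩ := addChar_matrix l
  obtain ⟨x, hx, hx0⟩ := exists_zero_quad hn b
  refine ⟨Sum.elim x 0, v, ?_, hv, fun a => ?_⟩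
  · intro h
    apply hx
    ext i
    simpa using congr_fun h (Sum.inl i)
  · have h := hl (Matrix.of fun i j => (-a) * (x i * x j))
    rw [siegel_tv, neg_neg, hb] at h
    rw [h]
    have : ∑ i, ∑ j, b i j * (Matrix.of fun i j => (-a) * (x i * x j)) i j =
        (-a) * ∑ i, ∑ j, b i j * (x i * x j) := by
      simp only [Finset.mul_sum, Matrix.of_apply]
      refine Finset.sum_congr rfl fun i _ => Finset.sum_congr rfl fun j _ => by ring
    rw [this, hx0, mul_zero, AddChar.map_zero_eq_one, one_smul]

end Eig



section CharTheory
open scoped ComplexOrder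
set_option linter.unusedSectionVars false

variable {G : Type} [Group G] [Finite G]

lemma trace_conj {d : ℕ} (R : G →* Matrix (Fin d) (Fin d) ℂ) (g : G) :
    (starRingEnd ℂ) (R g).trace = (R g⁻¹).trace := by
  classical
  have := Fintype.ofFinite G
  let H : Matrix (Fin d) (Fin d) ℂ := ∑ h : G, (R h)ᴴ * R h
  have hpos : H.PosDef := by
    have h1 : ∑ h ∈ Finset.univ.erase (1 : G), (R h)ᴴ * R h + (R 1)ᴴ * R 1 = H :=
      Finset.sum_erase_add _ _ (Finset.mem_univ _)
    rw [← h1]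
    apply Matrix.PosDef.posSemidef_add
    · exact Matrix.posSemidef_sum _ fun i _ => Matrix.posSemidef_conjTranspose_mul_self _
    · simpa using Matrix.PosDef.one
  have hinv : (R g)ᴴ * H * R g = H := by
    simp only [H, Finset.mul_sum, Finset.sum_mul]
    refine Fintype.sum_equiv (Equiv.mulRight g) _ _ fun h => ?_
    simp [Matrix.mul_assoc]
  have hgg : R g * R g⁻¹ = 1 := by rw [← map_mul]; simp
  have h2 : (R g)ᴴ * H = H * R g⁻¹ := by
    calc (R g)ᴴ * H = ((R g)ᴴ * H * R g) * R g⁻¹ := by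
          rw [Matrix.mul_assoc _ (R g), hgg, Matrix.mul_one]
      _ = _ := by rw [hinv]
  have hu : IsUnit H.det := (Matrix.isUnit_iff_isUnit_det _).1 hpos.isUnit
  have h3 : (R g)ᴴ = H * R g⁻¹ * H⁻¹ := by
    rw [← h2, Matrix.mul_assoc, Matrix.mul_nonsing_inv _ hu, Matrix.mul_one]
  have h4 : (R g)ᴴ.trace = (R g⁻¹).trace := by
    rw [h3, Matrix.trace_mul_comm, ← Matrix.mul_assoc, Matrix.nonsing_inv_mul _ hu, Matrix.one_mul]
  rw [← h4, Matrix.trace_conjTranspose]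
  rfl

variable {V W : Type} [AddCommGroup V] [Module ℂ V] [FiniteDimensional ℂ V]
  [AddCommGroup W] [Module ℂ W] [FiniteDimensional ℂ W]

/-- matrix form of a representation -/
noncomputable def matHom (ρ : Representation ℂ G V) :
    G →* Matrix (Fin (Module.finrank ℂ V)) (Fin (Module.finrank ℂ V)) ℂ :=
  (LinearMap.toMatrixAlgEquiv (Module.finBasis ℂ V)).toRingEquiv.toMonoidHom.comp ρ

lemma matHom_trace (ρ : Representation ℂ G V) (g : G) :
    (matHom ρ g).trace = ρ.character g :=
  (LinearMap.trace_eq_matrix_trace ℂ (Module.finBasis ℂ V) (ρ g)).symm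

lemma conj_character (ρ : Representation ℂ G V) (g : G) :
    (starRingEnd ℂ) (ρ.character g) = ρ.character g⁻¹ := by
  rw [← matHom_trace, ← matHom_trace, trace_conj]

lemma isChar_character (ρ : Representation ℂ G V) : IsChar ρ.character :=
  ⟨_, (matHom ρ).toHomUnits, fun g => (matHom_trace ρ g).symm⟩

lemma charInner_character (σ : Representation ℂ G W) (ρ : Representation ℂ G V) :
    charInner σ.character ρ.character = Module.finrank ℂ (Representation.IntertwiningMap ρ σ) := by
  have := Fintype.ofFinite G
  have hc : (Nat.card G : ℂ) ≠ 0 := Nat.cast_ne_zero.2 Nat.card_pos.ne'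
  have := invertibleOfNonzero hc
  rw [← Representation.card_inv_mul_sum_char_mul_char_eq_finrank, charInner,
    finsum_eq_sum_of_fintype]
  simp_rw [conj_character]

lemma IsChar.exists_rep {χ : G → ℂ} (h : IsChar χ) :
    ∃ (d : ℕ) (ρ : Representation ℂ G (Fin d → ℂ)), χ = ρ.character := by
  obtain ⟨d, R, hR⟩ := h
  refine ⟨d, (Matrix.toLinAlgEquiv' (R := ℂ) (n := Fin d)).toRingEquiv.toMonoidHom.comp
    ((Units.coeHom _).comp R), ?_⟩
  ext g
  rw [hR]
  exact (Matrix.trace_toLin'_eq _).symm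

lemma char_linHom_self (ρ : Representation ℂ G V) :
    ρ.character * (fun g => (starRingEnd ℂ) (ρ.character g)) =
      (Representation.linHom ρ ρ).character := by
  ext g
  rw [Representation.char_linHom, Pi.mul_apply, conj_character, mul_comm]

lemma isIrrChar_character (ρ : Representation ℂ G V) [ρ.IsIrreducible] : IsIrrChar ρ.character := by
  refine ⟨isChar_character ρ, ?_⟩
  rw [charInner_character, Representation.IsIrreducible.finrank_intertwiningMap_self]
  simp

lemma exists_irred_sub (τ : Representation ℂ G V) (C : Subrepresentation τ) (hC : C ≠ ⊥) :
    ∃ S ≤ C, S.toRepresentation.IsIrreducible := by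
  have h0 : ∀ S : Subrepresentation τ, S ≠ ⊥ ↔ S.toSubmodule ≠ ⊥ := fun S =>
    (Subrepresentation.toSubmodule_injective (ρ := τ)).ne_iff.symm
  obtain ⟨S, ⟨hSC, hS0⟩, hmin⟩ := WellFounded.has_min
    (measure fun S : Subrepresentation τ => Module.finrank ℂ S.toSubmodule).wf
    {S | S ≤ C ∧ S ≠ ⊥} ⟨C, le_rfl, hC⟩
  refine ⟨S, hSC, ?_⟩
  have hnt : Nontrivial (Subrepresentation S.toRepresentation) := by
    refine ⟨⊥, ⊤, fun h => ?_⟩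
    apply (h0 S).1 hS0
    rw [eq_bot_iff]
    intro x hx
    have h1 : (⟨x, hx⟩ : S.toSubmodule) ∈ (⊤ : Subrepresentation S.toRepresentation) := by
      trivial
    rw [← h] at h1
    have h2 : (⟨x, hx⟩ : S.toSubmodule) = 0 := h1
    simpa using h2
  refine { eq_bot_or_eq_top := fun N => ?_ }
  by_cases hN : N = ⊥
  · exact Or.inl hN
  right
  let N' : Subrepresentation τ :=
    { toSubmodule := N.toSubmodule.map S.toSubmodule.subtype
      apply_mem_toSubmodule := by
        rintro g _ ⟨y, hy, rfl⟩
        exact ⟨S.toRepresentation g y, N.apply_mem_toSubmodule g hy, rfl⟩ }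
  have hN'S : N' ≤ S := by
    rintro _ ⟨y, hy, rfl⟩
    exact y.2
  have hN'0 : N' ≠ ⊥ := by
    rw [h0]
    intro h
    apply hN
    apply Subrepresentation.toSubmodule_injective
    exact Submodule.map_injective_of_injective (Submodule.injective_subtype S.toSubmodule)
      (h.trans (Submodule.map_bot _).symm)
  have hle : Module.finrank ℂ S.toSubmodule ≤ Module.finrank ℂ N'.toSubmodule :=
    not_lt.1 (hmin N' ⟨hN'S.trans hSC, hN'0⟩)
  have heq : Module.finrank ℂ N'.toSubmodule = Module.finrank ℂ N.toSubmodule :=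
    Submodule.finrank_map_subtype_eq S.toSubmodule N.toSubmodule
  apply Subrepresentation.toSubmodule_injective
  exact Submodule.eq_top_of_finrank_eq
    (le_antisymm (Submodule.finrank_le _) (by rw [← heq]; exact hle))

/-- A representation with character `1` is trivial. -/
lemma trivial_of_char_one (ρ : Representation ℂ G V) (h : ρ.character = 1) (g : G) (v : V) :
    ρ g v = v := by
  have h1 : Module.finrank ℂ V = 1 := by
    have := congr_fun h 1
    rw [Representation.char_one, Pi.one_apply] at this
    exact_mod_cast this
  obtain ⟨c, hc⟩ := (LinearMap.existsUnique_eq_smul_id_of_finrank_eq_one h1 (ρ g)).exists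
  have h2 : LinearMap.trace ℂ V (ρ g) = 1 := congr_fun h g
  rw [hc, map_smul, LinearMap.trace_id, h1] at h2
  have : c = 1 := by simpa using h2
  rw [hc, this]; simp

/-- General part: from an intertwining map `M → End V` whose image is not scalar. -/
lemma exists_theta (ρ : Representation ℂ G V) (hρ : charInner ρ.character ρ.character = 1)
    [Nontrivial V]
    (τ : Representation ℂ G W) (f : Representation.IntertwiningMap τ (Representation.linHom ρ ρ))
    (x : W) (hx : ∀ c : ℂ, f x ≠ c • LinearMap.id) :
    ∃ θ : G → ℂ, IsIrrChar θ ∧ θ ≠ 1 ∧ IsConstituent θ τ.character ∧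
      IsConstituent θ (Representation.linHom ρ ρ).character := by
  -- invariants are scalars
  have hinv : ∀ A : V →ₗ[ℂ] V, (∀ g, Representation.linHom ρ ρ g A = A) →
      ∃ c : ℂ, A = c • LinearMap.id := by
    intro A hA
    have h1 : Module.finrank ℂ (Representation.linHom ρ ρ).invariants = 1 := by
      rw [charInner_character] at hρ
      rw [(Representation.invariantsEquivIntertwiningMap ρ ρ).finrank_eq]
      exact_mod_cast hρ
    have hid : (LinearMap.id : V →ₗ[ℂ] V) ∈ (Representation.linHom ρ ρ).invariants := by
      intro g
      rw [Representation.linHom_apply]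
      ext v
      simp
    obtain ⟨c, hc⟩ := (finrank_eq_one_iff_of_nonzero'
      (⟨LinearMap.id, hid⟩ : (Representation.linHom ρ ρ).invariants) (by
        intro h
        obtain ⟨v, hv⟩ := exists_ne (0 : V)
        exact hv (by simpa using LinearMap.congr_fun (congr_arg Subtype.val h) v))).1 h1 ⟨A, hA⟩
    exact ⟨c, (congr_arg Subtype.val hc).symm⟩
  let N : Subrepresentation τ :=
    { toSubmodule := (Submodule.span ℂ {(LinearMap.id : V →ₗ[ℂ] V)}).comap f.toLinearMap
      apply_mem_toSubmodule := by
        intro g v hv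
        rw [Submodule.mem_comap, Submodule.mem_span_singleton] at hv ⊢
        obtain ⟨c, hc⟩ := hv
        refine ⟨c, ?_⟩
        have h1 : f.toLinearMap (τ g v) = Representation.linHom ρ ρ g (f.toLinearMap v) :=
          LinearMap.congr_fun (f.isIntertwining' g) v
        rw [h1, ← hc, map_smul, Representation.linHom_apply]
        congr 1
        ext v
        simp }
  have : NeZero (Nat.card G : ℂ) := ⟨Nat.cast_ne_zero.2 Nat.card_pos.ne'⟩
  obtain ⟨C, hC⟩ := exists_isCompl N
  have hC0 : C ≠ ⊥ := by
    rintro rfl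
    have hN : N = ⊤ := by simpa using hC.sup_eq_top
    have : x ∈ N := by rw [hN]; trivial
    obtain ⟨c, hc⟩ := Submodule.mem_span_singleton.1 (Submodule.mem_comap.1 this)
    exact hx c hc.symm
  obtain ⟨S, hSC, hS⟩ := exists_irred_sub τ C hC0
  have hdisj : ∀ y ∈ S, y ∈ N → y = 0 := by
    intro y hy hyN
    have : y ∈ N ⊓ C := ⟨hyN, hSC hy⟩
    rw [hC.inf_eq_bot] at this
    exact this
  have hSnt : Nontrivial S.toSubmodule := by
    by_contra hn
    rw [not_nontrivial_iff_subsingleton] at hn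
    have hbt : (⊥ : Subrepresentation S.toRepresentation) = ⊤ := by
      apply Subrepresentation.toSubmodule_injective
      exact Subsingleton.elim _ _
    exact bot_ne_top hbt
  let ι : Representation.IntertwiningMap S.toRepresentation τ :=
    { S.toSubmodule.subtype with isIntertwining' := fun g => rfl }
  let fι : Representation.IntertwiningMap S.toRepresentation (Representation.linHom ρ ρ) :=
    { f.toLinearMap ∘ₗ S.toSubmodule.subtype with
      isIntertwining' := fun g => by
        ext1 y
        exact LinearMap.congr_fun (f.isIntertwining' g) y.1 }
  obtain ⟨y, hy⟩ := exists_ne (0 : S.toSubmodule)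
  have hyN : y.1 ∉ N := fun h => hy (Subtype.ext (hdisj y.1 y.2 h))
  have hpos : ∀ {U : Type} [AddCommGroup U] [Module ℂ U] [FiniteDimensional ℂ U]
      (μ : Representation ℂ G U) (k : Representation.IntertwiningMap S.toRepresentation μ),
      k ≠ 0 → IsConstituent S.toRepresentation.character μ.character := by
    intro U _ _ _ μ k hk
    rw [IsConstituent, charInner_character, Nat.cast_ne_zero]
    have : Nontrivial (Representation.IntertwiningMap S.toRepresentation μ) := ⟨k, 0, hk⟩
    exact Module.finrank_pos.ne'
  refine ⟨S.toRepresentation.character, isIrrChar_character _, ?_, hpos τ ι ?_, hpos _ fι ?_⟩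
  · intro h1
    have htriv := trivial_of_char_one S.toRepresentation h1
    apply hyN
    obtain ⟨c, hc⟩ := hinv (f.toLinearMap y.1) (fun g => by
      have h2 : f.toLinearMap (τ g y.1) = Representation.linHom ρ ρ g (f.toLinearMap y.1) :=
        LinearMap.congr_fun (f.isIntertwining' g) y.1
      have h3 : τ g y.1 = y.1 := congr_arg Subtype.val (htriv g y)
      rw [← h2, h3])
    exact Submodule.mem_comap.2 (Submodule.mem_span_singleton.2 ⟨c, hc.symm⟩)
  · intro h
    have : ι.toLinearMap y = 0 := by rw [h]; rfl
    exact hy (Subtype.ext this)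
  · intro h
    have : fι.toLinearMap y = 0 := by rw [h]; rfl
    apply hyN
    refine Submodule.mem_comap.2 ?_
    have h2 : f.toLinearMap y.1 = 0 := this
    rw [h2]
    exact Submodule.zero_mem _

end CharTheory

section Final
set_option linter.unusedSectionVars false
variable {F : Type} [Field F] [Fintype F] {n : ℕ}

/-- lines -/
abbrev Lines (F : Type) [Field F] (n : ℕ) : Type :=
  {L : Submodule F ((Fin n ⊕ Fin n) → F) // Module.finrank F L = 1}

lemma mulVec_inj (g : symplecticGroup (Fin n) F) :
    Function.Injective (Matrix.mulVecLin g.1) := by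
  intro u v h
  have h1 : (g⁻¹).1 *ᵥ (g.1 *ᵥ u) = (g⁻¹).1 *ᵥ (g.1 *ᵥ v) := congr_arg _ h
  rw [Matrix.mulVec_mulVec, Matrix.mulVec_mulVec, ← Submonoid.coe_mul, inv_mul_cancel] at h1
  simpa using h1

/-- action on lines -/
noncomputable instance : MulAction (symplecticGroup (Fin n) F) (Lines F n) where
  smul g L := ⟨L.1.map (Matrix.mulVecLin g.1), by
    rw [← (Submodule.equivMapOfInjective _ (mulVec_inj g) L.1).finrank_eq, L.2]⟩
  one_smul L := Subtype.ext (by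
    change L.1.map (Matrix.mulVecLin (1 : Matrix _ _ F)) = L.1
    rw [Matrix.mulVecLin_one, Submodule.map_id])
  mul_smul g h L := Subtype.ext (by
    change L.1.map (Matrix.mulVecLin (g.1 * h.1)) =
      (L.1.map (Matrix.mulVecLin h.1)).map (Matrix.mulVecLin g.1)
    rw [Matrix.mulVecLin_mul, Submodule.map_comp])

lemma smul_line (g : symplecticGroup (Fin n) F) (L : Lines F n) :
    (g • L).1 = L.1.map (Matrix.mulVecLin g.1) := rfl

/-- permutation representation -/
noncomputable def permRep (G X : Type) [Group G] [MulAction G X] : Representation ℂ G (X → ℂ) where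
  toFun g := LinearMap.funLeft ℂ ℂ (fun x : X => g⁻¹ • x)
  map_one' := by ext; simp [LinearMap.funLeft]
  map_mul' g h := by
    ext f x
    simp [LinearMap.funLeft, mul_smul]

lemma permRep_apply {G X : Type} [Group G] [MulAction G X] (g : G) (f : X → ℂ) (x : X) :
    permRep G X g f x = f (g⁻¹ • x) := rfl

lemma permRep_char {G X : Type} [Group G] [Fintype X] [MulAction G X] (g : G) :
    (permRep G X).character g = Nat.card {x : X // g • x = x} := by
  classical
  rw [Representation.character, LinearMap.trace_eq_matrix_trace ℂ (Pi.basisFun ℂ X), Matrix.trace]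
  simp only [Matrix.diag_apply, LinearMap.toMatrix_apply, Pi.basisFun_apply, Pi.basisFun_repr,
    permRep_apply, Pi.single_apply, inv_smul_eq_iff]
  rw [Finset.sum_boole, Nat.card_eq_fintype_card, Fintype.card_subtype]
  congr 3
  ext x
  exact eq_comm

noncomputable instance : Fintype (Lines F n) := by
  classical
  exact Fintype.ofFinite _

lemma linesPermChar_eq :
    linesPermChar F n = (permRep (symplecticGroup (Fin n) F) (Lines F n)).character := by
  ext g
  rw [permRep_char, linesPermChar]
  congr 1
  refine Nat.card_congr ⟨fun L => ⟨⟨L.1, L.2.1⟩, Subtype.ext L.2.2⟩,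
    fun L => ⟨L.1.1, L.1.2, congr_arg Subtype.val L.2⟩, fun L => rfl, fun L => rfl⟩

/-- generator of a line -/
lemma line_gen (L : Lines F n) : ∃ w, w ≠ 0 ∧ L.1 = Submodule.span F {w} := by
  obtain ⟨w, hw, h⟩ := finrank_eq_one_iff'.1 L.2
  refine ⟨w.1, fun h0 => hw (Subtype.ext h0), le_antisymm ?_ ?_⟩
  · intro x hx
    obtain ⟨c, hc⟩ := h ⟨x, hx⟩
    exact Submodule.mem_span_singleton.2 ⟨c, congr_arg Subtype.val hc⟩
  · rw [Submodule.span_singleton_le_iff_mem]; exact w.2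

/-- chosen generator -/
noncomputable def gen (L : Lines F n) : Fin n ⊕ Fin n → F := (line_gen L).choose
lemma gen_ne (L : Lines F n) : gen L ≠ 0 := (line_gen L).choose_spec.1
lemma gen_span (L : Lines F n) : L.1 = Submodule.span F {gen L} := (line_gen L).choose_spec.2

variable {V : Type} [AddCommGroup V] [Module ℂ V]
  (ρ : Representation ℂ (symplecticGroup (Fin n) F) V)

/-- (unnormalised) projector to the fixed space of the transvection group -/
noncomputable def proj (w : Fin n ⊕ Fin n → F) : V →ₗ[ℂ] V := ∑ a : F, ρ (tv a w)

lemma proj_smul {c : F} (hc : c ≠ 0) (w : Fin n ⊕ Fin n → F) : proj ρ (c • w) = proj ρ w := by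
  simp only [proj, tv_smul]
  exact Fintype.sum_equiv (Equiv.mulRight₀ (c ^ 2) (pow_ne_zero 2 hc)) _ _ fun a => rfl

lemma proj_conj (g : symplecticGroup (Fin n) F) (w : Fin n ⊕ Fin n → F) :
    ρ g * proj ρ w = proj ρ (g.1 *ᵥ w) * ρ g := by
  simp only [proj, Finset.mul_sum, Finset.sum_mul, ← map_mul, tv_conj]

lemma proj_line {L : Lines F n} {w : Fin n ⊕ Fin n → F} (h : L.1 = Submodule.span F {w}) :
    proj ρ (gen L) = proj ρ w := by
  have h1 : gen L ∈ Submodule.span F {w} := by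
    rw [← h, gen_span L]; exact Submodule.mem_span_singleton_self _
  obtain ⟨c, hc⟩ := Submodule.mem_span_singleton.1 h1
  have hc0 : c ≠ 0 := by
    rintro rfl
    exact gen_ne L (by rw [← hc, zero_smul])
  rw [← hc, proj_smul ρ hc0]

lemma proj_gen_smul (g : symplecticGroup (Fin n) F) (L : Lines F n) :
    proj ρ (gen (g • L)) = proj ρ (g.1 *ᵥ gen L) := by
  apply proj_line
  rw [smul_line, gen_span L, Submodule.map_span, Set.image_singleton]
  rfl

lemma tv_proj (b : F) (w : Fin n ⊕ Fin n → F) : ρ (tv b w) * proj ρ w = proj ρ w := by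
  simp only [proj, Finset.mul_sum, ← map_mul, tv_add]
  exact Fintype.sum_equiv (Equiv.addLeft b) _ _ fun a => rfl

lemma ind_line_map (p : Lines F n → (V →ₗ[ℂ] V)) (hp : ∀ g L, ρ g * p L = p (g • L) * ρ g)
    [FiniteDimensional ℂ V] :
    ∃ f : Representation.IntertwiningMap (permRep (symplecticGroup (Fin n) F) (Lines F n))
      (Representation.linHom ρ ρ), ∀ φ, f.toLinearMap φ = ∑ L, φ L • p L := by
  refine ⟨{ toFun := fun φ => ∑ L, φ L • p L
            map_add' := fun φ ψ => by simp [add_smul, Finset.sum_add_distrib]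
            map_smul' := fun c φ => by simp [Finset.smul_sum, smul_smul]
            isIntertwining' := fun g => ?_ }, fun φ => rfl⟩
  refine LinearMap.ext fun φ => ?_
  change ∑ L, permRep _ _ g φ L • p L = Representation.linHom ρ ρ g (∑ L, φ L • p L)
  rw [map_sum]
  symm
  refine Fintype.sum_equiv (MulAction.toPerm g) _ _ fun L => ?_
  simp only [map_smul, MulAction.toPerm_apply, permRep_apply, inv_smul_smul]
  congr 1
  rw [Representation.linHom_apply]
  change ρ g * (p L * ρ g⁻¹) = _
  rw [← mul_assoc, hp, mul_assoc, ← map_mul]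
  simp

lemma proj_not_scalar [FiniteDimensional ℂ V]
    (hρ : charInner ρ.character ρ.character = 1) (h1 : ρ.character ≠ 1)
    (w : Fin n ⊕ Fin n → F) (hw : w ≠ 0) (v : V) (hv : v ≠ 0)
    (hf : ∀ a, ρ (tv a w) v = v) (c : ℂ) : proj ρ w ≠ c • LinearMap.id := by
  intro hc
  have hcv : c • v = (Fintype.card F : ℂ) • v := by
    have := LinearMap.congr_fun hc v
    rw [proj, LinearMap.sum_apply] at this
    simp only [hf, Finset.sum_const, Finset.card_univ, LinearMap.smul_apply,
      LinearMap.id_apply] at this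
    rw [← this, Nat.cast_smul_eq_nsmul]
  have hc0 : c ≠ 0 := by
    rintro rfl
    rw [zero_smul] at hcv
    have := smul_eq_zero.1 hcv.symm
    simp [hv] at this
  have h2 : ∀ a, ρ (tv a w) = 1 := by
    intro a
    have h3 := tv_proj ρ a w
    rw [hc] at h3
    refine LinearMap.ext fun x => ?_
    have h4 := LinearMap.congr_fun h3 x
    simp only [Module.End.mul_apply, LinearMap.smul_apply, LinearMap.id_apply, map_smul] at h4
    exact smul_right_injective V hc0 h4
  have h5 : ∀ g, ρ g = 1 := by
    intro g
    refine sp_gen' (MonoidHom.ker ρ) (fun a u => ?_) g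
    rw [MonoidHom.mem_ker]
    by_cases hu : u = 0
    · have : tv a u = 1 := sp_ext fun v => by rw [tv_mulVec, hu]; simp
      rw [this, map_one]
    obtain ⟨g, hg⟩ := sp_trans hw hu
    have h6 : tv a u = g * tv a w * g⁻¹ := by rw [tv_conj, hg]; group
    rw [h6, map_mul, map_mul, h2, mul_one, ← map_mul, mul_inv_cancel, map_one]
  have h7 : ∀ g, ρ.character g = Module.finrank ℂ V := by
    intro g
    rw [Representation.character, h5, LinearMap.trace_one]
  have h8 : charInner ρ.character ρ.character = (Module.finrank ℂ V : ℂ) ^ 2 := by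
    have := Fintype.ofFinite (symplecticGroup (Fin n) F)
    rw [charInner, finsum_eq_sum_of_fintype]
    simp only [h7, Finset.sum_const, Finset.card_univ, Complex.conj_natCast]
    rw [Nat.card_eq_fintype_card, nsmul_eq_mul, ← mul_assoc, inv_mul_cancel₀, one_mul, sq]
    exact Nat.cast_ne_zero.2 Fintype.card_ne_zero
  rw [hρ] at h8
  have h9 : Module.finrank ℂ V = 1 := by
    have : (Module.finrank ℂ V) ^ 2 = 1 := by exact_mod_cast h8.symm
    simpa using this
  apply h1
  ext g
  rw [h7, h9]; simp

lemma two_le_intertwining {G U W : Type*} [Group G] [AddCommGroup U] [Module ℂ U]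
    [AddCommGroup W] [Module ℂ W] [FiniteDimensional ℂ U] [FiniteDimensional ℂ W]
    {σ : Representation ℂ G U} {τ : Representation ℂ G W}
    (f1 f2 : Representation.IntertwiningMap σ τ) (u : U)
    (h : LinearIndependent ℂ ![f1.toLinearMap u, f2.toLinearMap u]) :
    2 ≤ Module.finrank ℂ (Representation.IntertwiningMap σ τ) := by
  let e := Representation.invariantsEquivIntertwiningMap σ τ
  rw [← e.finrank_eq]
  let ev : (Representation.linHom σ τ).invariants →ₗ[ℂ] W :=
    (LinearMap.applyₗ u).comp (Representation.linHom σ τ).invariants.subtype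
  have h2 : LinearIndependent ℂ ![e.symm f1, e.symm f2] := by
    refine LinearIndependent.of_comp ev ?_
    convert h using 1
    ext i
    fin_cases i <;> rfl
  simpa using h2.fintype_card_le_finrank

end Final

open scoped ComplexOrder in
/-- **Key step in Lemma 2.2 of Liebeck–Shalev–Tiep.** For `G = Sp_{2n}(q)`, `n ≥ 3`,
with `π` the permutation character on lines of `𝔽_q^{2n}`: for every nontrivial
irreducible `χ`, `⟨χ·conj χ, π⟩ ≥ 2`; consequently `χ·conj χ` contains a nontrivial
irreducible constituent of `π`. -/
theorem inner_mul_conj_permChar_ge_two (F : Type) [Field F] [Fintype F]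
    (n : ℕ) (hn : 3 ≤ n)
    (χ : Matrix.symplecticGroup (Fin n) F → ℂ) (hχ : IsIrrChar χ) (hχ1 : χ ≠ 1) :
    2 ≤ charInner (χ * (fun g => (starRingEnd ℂ) (χ g))) (linesPermChar F n) ∧
    ∃ θ : Matrix.symplecticGroup (Fin n) F → ℂ, IsIrrChar θ ∧ θ ≠ 1 ∧
      IsConstituent θ (linesPermChar F n) ∧
      IsConstituent θ (χ * (fun g => (starRingEnd ℂ) (χ g))) := by
  classical
  obtain ⟨d, ρ, rfl⟩ := hχ.1.exists_rep
  have hρ := hχ.2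
  have hnt : Nontrivial (Fin d → ℂ) := by
    by_contra h
    rw [not_nontrivial_iff_subsingleton] at h
    have h0 : ∀ g, ρ.character g = 0 := fun g => by
      rw [Representation.character, Subsingleton.elim (ρ g) 0, map_zero]
    rw [charInner] at hρ
    simp [h0] at hρ
  obtain ⟨w, v, hw, hv, hf⟩ := exists_fixed hn ρ
  have hns := proj_not_scalar ρ hρ hχ1 w hw v hv hf
  let L0 : Lines F n := ⟨Submodule.span F {w}, finrank_span_singleton hw⟩
  obtain ⟨f1, hf1⟩ := ind_line_map ρ (fun _ => 1) (fun g L => by simp)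
  obtain ⟨f2, hf2⟩ := ind_line_map ρ (fun L => proj ρ (gen L)) (fun g L => by
    rw [proj_gen_smul, proj_conj])
  have e1 : f1.toLinearMap (Pi.single L0 1) = LinearMap.id := by
    rw [hf1]; simp [Pi.single_apply]; rfl
  have e2 : f2.toLinearMap (Pi.single L0 1) = proj ρ w := by
    rw [hf2, ← proj_line ρ (L := L0) (w := w) rfl]; simp [Pi.single_apply]
  rw [char_linHom_self, linesPermChar_eq]
  refine ⟨?_, exists_theta ρ hρ _ f2 (Pi.single L0 1) fun c hc => hns c (e2.symm.trans hc)⟩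
  rw [charInner_character]
  have hli : LinearIndependent ℂ ![(LinearMap.id : (Fin d → ℂ) →ₗ[ℂ] (Fin d → ℂ)), proj ρ w] := by
    refine LinearIndependent.pair_iff.2 ?_
    intro s t h'
    have ht : t = 0 := by
      by_contra ht
      apply hns (-(t⁻¹ * s))
      have := congr_arg (fun k => t⁻¹ • k) h'
      simp only [smul_add, smul_smul, inv_mul_cancel₀ ht, one_smul, smul_zero] at this
      refine LinearMap.ext fun x => ?_
      have hx : (t⁻¹ * s) • x + proj ρ w x = 0 := LinearMap.congr_fun this x
      change proj ρ w x = (-(t⁻¹ * s)) • x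
      rw [neg_smul]
      exact eq_neg_of_add_eq_zero_right hx
    refine ⟨?_, ht⟩
    rw [ht, zero_smul, add_zero] at h'
    have := LinearMap.congr_fun h' v
    simpa [hv] using this
  have hcard := two_le_intertwining f1 f2 (Pi.single L0 1) (by rw [e1, e2]; exact hli)
  exact_mod_cast hcard

end McKayGraphs
end

section
/- Let q = p^f be a prime power, n even, and G = Sp_n(q). Let g ∈ G be semisimple with s = supp(g) satisfying 1 ≤ s < n/2. Then the p-part of the order of the centralizer of g in G satisfies |C_G(g)|_p ≤ q^{((n−s)² + s²)/4}. -/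
namespace McKayGraphs

/-- The support of a matrix `g`: `supp(g) = dim V − max_{x ∈ 𝔽̄_q^×} dim ker(g − x·I)`,
the codimension of the largest eigenspace of `g` over the algebraic closure. -/
noncomputable def matSupp {F : Type*} [Field F] {ι : Type*} [Fintype ι]
    (g : Matrix ι ι F) : ℕ :=
  Fintype.card ι -
    ⨆ x : (AlgebraicClosure F)ˣ,
      Module.finrank (AlgebraicClosure F)
        (LinearMap.ker
          ((g.map (algebraMap F (AlgebraicClosure F))).mulVecLin
            - (x : AlgebraicClosure F) • LinearMap.id))


theorem pgroup_card_bound {F V G : Type*} [Field F] [Finite F] [AddCommGroup V] [Module F V]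
    [Module.Finite F V] [Group G] [Finite G] [DistribMulAction G V] [SMulCommClass G F V]
    (p : ℕ) [Fact p.Prime] (hpF : p ∣ Nat.card F)
    (B : V →ₗ[F] V →ₗ[F] F) (hB : ∀ v, B v v = 0)
    (hG : ∀ (x : G) (u v : V), B (x • u) (x • v) = B u v) :
    ∀ (d : ℕ) (W : Submodule F V) (H : Subgroup G), Module.finrank F W = d → IsPGroup p H →
      (∀ x ∈ H, ∀ w ∈ W, x • w ∈ W) →
      (∀ w ∈ W, (∀ u ∈ W, B w u = 0) → w = 0) →
      ∃ K : Subgroup G, K ≤ H ∧ (∀ x ∈ K, ∀ w ∈ W, x • w = w) ∧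
        Nat.card H ^ 4 ≤ Nat.card F ^ (d ^ 2) * Nat.card K ^ 4 := by
  have hanti : ∀ u v, B u v = - B v u := by
    intro u v
    have := hB (u + v)
    simp only [map_add, LinearMap.add_apply, hB, zero_add, add_zero] at this
    linear_combination this
  have hFin : Finite V := Module.finite_of_finite F
  have hq : 1 < Nat.card F := Finite.one_lt_card
  intro d
  induction d using Nat.strong_induction_on with
  | _ d ih =>
  intro W H hd hH hinv hnd
  by_cases hW : W = ⊥
  · subst hW
    refine ⟨H, le_rfl, ?_, ?_⟩
    · intro x _ w hw
      rw [(Submodule.mem_bot F).1 hw, smul_zero]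
    · exact Nat.le_mul_of_pos_left _ (by positivity)
  have hcW : Nat.card W = Nat.card F ^ d := by rw [Module.natCard_eq_pow_finrank (K := F), hd]
  have hd0 : d ≠ 0 := by
    rintro rfl
    exact hW (Submodule.finrank_eq_zero.1 hd)
  -- a fixed vector
  obtain ⟨v, hvW, hv0, hvfix⟩ : ∃ v ∈ W, v ≠ 0 ∧ ∀ x ∈ H, x • v = v := by
    let _ : MulAction H W :=
      { smul := fun h w => ⟨(h : G) • (w : V), hinv h h.2 w w.2⟩
        one_smul := fun w => Subtype.ext (one_smul G (w : V))
        mul_smul := fun a b w => Subtype.ext (mul_smul (a : G) (b : G) (w : V)) }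
    have h0 : (0 : W) ∈ MulAction.fixedPoints H W := fun h => Subtype.ext (smul_zero (h : G))
    have hdvd : p ∣ Nat.card W := by
      rw [hcW]; exact dvd_pow hpF hd0
    obtain ⟨b, hb, hne⟩ := hH.exists_fixed_point_of_prime_dvd_card_of_fixed_point W hdvd h0
    refine ⟨b, b.2, ?_, ?_⟩
    · intro h; exact hne (Subtype.ext h.symm)
    · intro x hx
      exact congrArg Subtype.val (hb ⟨x, hx⟩)
  obtain ⟨w, hwW, hvw⟩ : ∃ w ∈ W, B v w = 1 := by
    by_contra hcon
    push Not at hcon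
    apply hv0
    apply hnd v hvW
    intro u hu
    by_contra hne
    exact hcon ((B v u)⁻¹ • u) (W.smul_mem _ hu) (by simp [hne])
  have hwv : B w v = -1 := by rw [hanti, hvw]
  -- orbit bound
  have horb : Nat.card (MulAction.orbit H w) * Nat.card F ≤ Nat.card F ^ d := by
    rw [← hcW, ← Nat.card_prod]
    have hmem : ∀ u ∈ MulAction.orbit H w, u ∈ W ∧ B v u = 1 := by
      rintro _ ⟨h, rfl⟩
      refine ⟨hinv h h.2 w hwW, ?_⟩
      have := hG h v w
      rw [hvfix h h.2, hvw] at this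
      exact this
    let φ : MulAction.orbit H w × F → W := fun z =>
      ⟨(z.1 : V) + z.2 • w, W.add_mem (hmem _ z.1.2).1 (W.smul_mem _ hwW)⟩
    refine Nat.card_le_card_of_injective φ ?_
    rintro ⟨u, a⟩ ⟨u', a'⟩ h
    have h1 : (u : V) + a • w = (u' : V) + a' • w := congrArg Subtype.val h
    have h2 := congrArg (B v) h1
    simp only [map_add, map_smul, (hmem _ u.2).2, (hmem _ u'.2).2, hvw, smul_eq_mul, mul_one,
      add_right_inj] at h2
    subst h2
    simp only [add_left_inj] at h1
    rw [Subtype.ext h1]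
  have horb' : Nat.card (MulAction.orbit H w) ≤ Nat.card F ^ (d - 1) := by
    obtain ⟨e, rfl⟩ := Nat.exists_eq_succ_of_ne_zero hd0
    rw [pow_succ] at horb
    exact Nat.le_of_mul_le_mul_right horb (by omega)
  have hos : Nat.card H = Nat.card (MulAction.orbit H w) * Nat.card (MulAction.stabilizer H w) := by
    rw [← Nat.card_prod]
    exact (Nat.card_congr (MulAction.orbitProdStabilizerEquivGroup H w)).symm
  set H' : Subgroup G := (MulAction.stabilizer H w).map H.subtype with hH'
  have hcH' : Nat.card (MulAction.stabilizer H w) = Nat.card H' :=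
    (Subgroup.card_map_of_injective H.subtype_injective).symm
  have hH'le : H' ≤ H := Subgroup.map_subtype_le _
  have hH'w : ∀ x ∈ H', x • w = w := by
    rintro _ ⟨x, hx, rfl⟩
    exact hx
  let W' : Submodule F V := W ⊓ LinearMap.ker (B v) ⊓ LinearMap.ker (B w)
  have hW' : ∀ u, u ∈ W' ↔ (u ∈ W ∧ B v u = 0) ∧ B w u = 0 := by
    intro u; simp [W']
  have hW'd : Module.finrank F W' + 2 ≤ d := by
    have : Nat.card (W' × F × F) ≤ Nat.card W := by
      let φ : W' × F × F → W := fun z =>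
        ⟨(z.1 : V) + (z.2.1 • v + z.2.2 • w), W.add_mem ((hW' _).1 z.1.2).1.1
          (W.add_mem (W.smul_mem _ hvW) (W.smul_mem _ hwW))⟩
      refine Nat.card_le_card_of_injective φ ?_
      rintro ⟨u, a, b⟩ ⟨u', a', b'⟩ h
      have h1 : (u : V) + (a • v + b • w) = (u' : V) + (a' • v + b' • w) := congrArg Subtype.val h
      have h2 := congrArg (B v) h1
      have h3 := congrArg (B w) h1
      simp only [map_add, map_smul, ((hW' _).1 u.2).1.2, ((hW' _).1 u'.2).1.2, ((hW' _).1 u.2).2,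
        ((hW' _).1 u'.2).2, hvw, hwv, hB, smul_eq_mul, mul_one, mul_zero, zero_add, add_zero,
        mul_neg, neg_inj] at h2 h3
      subst h2 h3
      simp only [add_left_inj] at h1
      rw [Subtype.ext h1]
    rw [Nat.card_prod, Nat.card_prod, Module.natCard_eq_pow_finrank (K := F) (V := W'), hcW,
      ← sq, ← pow_add] at this
    exact (Nat.pow_le_pow_iff_right hq).1 this
  have hdec : ∀ u ∈ W, ∃ u' ∈ W', ∃ a b : F, u = u' + (a • v + b • w) := by
    intro u hu
    refine ⟨u - ((-(B w u)) • v + (B v u) • w), (hW' _).2 ⟨⟨?_, ?_⟩, ?_⟩, -(B w u), B v u, by abel⟩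
    · exact W.sub_mem hu (W.add_mem (W.smul_mem _ hvW) (W.smul_mem _ hwW))
    · simp [hB, hvw]
    · simp [hB, hwv]
  obtain ⟨K, hKH, hKfix, hK⟩ := ih (Module.finrank F W') (by omega) W' H' rfl (hH.to_le hH'le)
    (by
      intro x hx u hu
      obtain ⟨⟨hu1, hu2⟩, hu3⟩ := (hW' u).1 hu
      refine (hW' _).2 ⟨⟨hinv x (hH'le hx) u hu1, ?_⟩, ?_⟩
      · rw [← hG x v u, hvfix x (hH'le hx)] at hu2; exact hu2
      · rw [← hG x w u, hH'w x hx] at hu3; exact hu3)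
    (by
      intro u hu hu0
      obtain ⟨⟨hu1, hu2⟩, hu3⟩ := (hW' u).1 hu
      apply hnd u hu1
      intro y hy
      obtain ⟨y', hy', a, b, rfl⟩ := hdec y hy
      simp [hu0 y' hy', hanti u v, hanti u w, hu2, hu3])
  refine ⟨K, hKH.trans hH'le, ?_, ?_⟩
  · intro x hx y hy
    obtain ⟨y', hy', a, b, rfl⟩ := hdec y hy
    rw [smul_add, smul_add, smul_comm x a v, smul_comm x b w, hKfix x hx y' hy',
      hvfix x (hH'le (hKH hx)), hH'w x (hKH hx)]
  · obtain ⟨e, rfl⟩ : ∃ e, d = e + 2 := ⟨d - 2, by omega⟩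
    rw [hos, hcH', mul_pow]
    calc _ ≤ (Nat.card F ^ (e + 1)) ^ 4 * (Nat.card F ^ (e ^ 2) * Nat.card K ^ 4) := by
          refine Nat.mul_le_mul (Nat.pow_le_pow_left horb' 4) (hK.trans ?_)
          refine Nat.mul_le_mul_right _ (Nat.pow_le_pow_right (by omega) ?_)
          exact Nat.pow_le_pow_left (by omega) 2
      _ = _ := by
          rw [← mul_assoc, ← pow_mul, ← pow_add]
          congr 2; ring

theorem rank_map_field {F K n : Type*} [Field F] [Field K] [Fintype n] [DecidableEq n]
    (φ : F →+* K) (A : Matrix n n F) : (A.map φ).rank = A.rank := by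
  classical
  obtain ⟨L, L', D, h⟩ := Matrix.Pivot.exists_list_transvec_mul_diagonal_mul_list_transvec A
  have hd : ∀ L : List (Matrix.TransvectionStruct n F),
      ((L.map Matrix.TransvectionStruct.toMatrix).prod).det = 1 :=
    fun L => Matrix.TransvectionStruct.det_toMatrix_prod L
  set P := (L.map Matrix.TransvectionStruct.toMatrix).prod with hP
  set Q := (L'.map Matrix.TransvectionStruct.toMatrix).prod with hQ
  have h1 : P.det = 1 := hd L
  have h2 : Q.det = 1 := hd L'
  have h1' : (P.map φ).det = 1 := by
    rw [← RingHom.mapMatrix_apply, ← RingHom.map_det, h1, map_one]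
  have h2' : (Q.map φ).det = 1 := by
    rw [← RingHom.mapMatrix_apply, ← RingHom.map_det, h2, map_one]
  rw [h, Matrix.map_mul, Matrix.map_mul,
    Matrix.rank_mul_eq_left_of_isUnit_det _ _ (by rw [h2']; exact isUnit_one),
    Matrix.rank_mul_eq_right_of_isUnit_det _ _ (by rw [h1']; exact isUnit_one),
    Matrix.rank_mul_eq_left_of_isUnit_det _ _ (by rw [h2]; exact isUnit_one),
    Matrix.rank_mul_eq_right_of_isUnit_det _ _ (by rw [h1]; exact isUnit_one),
    Matrix.diagonal_map (map_zero φ), Matrix.rank_diagonal, Matrix.rank_diagonal]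
  simp

open Matrix in
theorem J_alt {R : Type*} [CommRing R] (m : ℕ) (v : Fin m ⊕ Fin m → R) :
    Matrix.toBilin' (J (Fin m) R) v v = 0 := by
  rw [Matrix.toBilin'_apply']
  simp only [J, Matrix.fromBlocks_mulVec, dotProduct, Fintype.sum_sum_type, Sum.elim_inl,
    Sum.elim_inr]
  simp only [Matrix.zero_mulVec, Matrix.neg_mulVec, Matrix.one_mulVec, zero_add, add_zero,
    Pi.neg_apply, Function.comp, mul_neg, Finset.sum_neg_distrib]
  rw [neg_add_eq_zero]
  exact Finset.sum_congr rfl fun i _ => mul_comm _ _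

open Matrix in
theorem J_inv' {R : Type*} [CommRing R] (m : ℕ) (A : Matrix (Fin m ⊕ Fin m) (Fin m ⊕ Fin m) R)
    (hA : A ∈ symplecticGroup (Fin m) R) (u v : Fin m ⊕ Fin m → R) :
    Matrix.toBilin' (J (Fin m) R) (A *ᵥ u) (A *ᵥ v) = Matrix.toBilin' (J (Fin m) R) u v := by
  rw [Matrix.toBilin'_apply', Matrix.toBilin'_apply']
  conv_rhs => rw [← SymplecticGroup.mem_iff'.1 hA]
  rw [← Matrix.mulVec_mulVec, ← Matrix.mulVec_mulVec, Matrix.dotProduct_mulVec u,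
    Matrix.vecMul_transpose]

open Matrix in
theorem J_nondeg {R : Type*} [Field R] (m : ℕ) :
    (Matrix.toBilin' (J (Fin m) R)).Nondegenerate :=
  LinearMap.BilinForm.nondegenerate_toBilin'_of_det_ne_zero' _ (isUnit_det_J (Fin m) R).ne_zero

open Matrix in
/-- An eigenspace of dimension more than half has eigenvalue of square one. -/
theorem eigen_sq {K : Type*} [Field K] (m : ℕ) (A : Matrix (Fin m ⊕ Fin m) (Fin m ⊕ Fin m) K)
    (hA : A ∈ symplecticGroup (Fin m) K) (x : K)
    (hd : m < Module.finrank K (LinearMap.ker (A.mulVecLin - x • LinearMap.id))) : x * x = 1 := by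
  by_contra hx
  set E := LinearMap.ker (A.mulVecLin - x • LinearMap.id) with hE
  have hmem : ∀ u ∈ E, A *ᵥ u = x • u := by
    intro u hu
    have : A.mulVecLin u - x • u = 0 := hu
    exact sub_eq_zero.1 this
  have hle : E ≤ LinearMap.BilinForm.orthogonal (Matrix.toBilin' (J (Fin m) K)) E := by
    intro u hu w hw
    have h := J_inv' m A hA w u
    rw [hmem u hu, hmem w hw] at h
    simp only [map_smul, LinearMap.smul_apply, smul_eq_mul] at h
    have h' : (x * x - 1) * (Matrix.toBilin' (J (Fin m) K)) w u = 0 := by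
      linear_combination h
    rcases mul_eq_zero.1 h' with h' | h'
    · exact absurd (sub_eq_zero.1 h') hx
    · exact h'
  have h1 := Submodule.finrank_mono hle
  rw [LinearMap.BilinForm.finrank_orthogonal (J_nondeg m)] at h1
  simp only [Module.finrank_fintype_fun_eq_card, Fintype.card_sum, Fintype.card_fin] at h1
  omega

open Matrix in
theorem ker_finrank {K n : Type*} [Field K] [Fintype n] [DecidableEq n] (A : Matrix n n K) (x : K) :
    (A - x • (1 : Matrix n n K)).rank +
      Module.finrank K (LinearMap.ker (A.mulVecLin - x • LinearMap.id)) = Fintype.card n := by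
  have h : A.mulVecLin - x • LinearMap.id = (A - x • (1 : Matrix n n K)).mulVecLin := by
    ext i j; simp [Matrix.sub_mulVec, Matrix.smul_mulVec]
  rw [h, Matrix.rank, LinearMap.finrank_range_add_finrank_ker, Module.finrank_fintype_fun_eq_card]

open Matrix in
theorem exists_eigen_aux (F K : Type*) [Field F] [Field K] [Algebra F K] (m : ℕ)
    (A : Matrix (Fin m ⊕ Fin m) (Fin m ⊕ Fin m) F)
    (hA : A ∈ symplecticGroup (Fin m) F) (s : ℕ) (D : Kˣ → ℕ)
    (hD : ∀ x, D x = Module.finrank K (LinearMap.ker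
      ((A.map (algebraMap F K)).mulVecLin - (x : K) • LinearMap.id)))
    (hs' : s = Fintype.card (Fin m ⊕ Fin m) - ⨆ x, D x) (h1 : 1 ≤ s) (h2 : s < m) :
    ∃ e : F, e * e = 1 ∧
      Module.finrank F (LinearMap.ker (A.mulVecLin - e • LinearMap.id)) + s = 2 * m := by
  have hbdd : BddAbove (Set.range D) := by
    refine ⟨2 * m, ?_⟩
    rintro _ ⟨x, rfl⟩
    have := ker_finrank (A.map (algebraMap F K)) (x : K)
    simp only [Fintype.card_sum, Fintype.card_fin] at this
    rw [hD]
    omega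
  obtain ⟨x, hx⟩ : ∃ x, D x = ⨆ x, D x := Nat.sSup_mem (Set.range_nonempty D) hbdd
  rw [← hx] at hs'
  simp only [Fintype.card_sum, Fintype.card_fin] at hs'
  have hxx : (x : K) * x = 1 := by
    refine eigen_sq m (A.map (algebraMap F K)) (SymplecticGroup.map_mem hA (algebraMap F K)) x ?_
    rw [← hD]
    omega
  obtain ⟨e, he, hex⟩ : ∃ e : F, e * e = 1 ∧ algebraMap F K e = x := by
    rcases mul_self_eq_one_iff.1 hxx with h | h
    · exact ⟨1, by simp, by simp [h]⟩
    · exact ⟨-1, by simp, by simp [h]⟩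
  refine ⟨e, he, ?_⟩
  have k1 := ker_finrank A e
  have k2 := ker_finrank (A.map (algebraMap F K)) (x : K)
  rw [← hD] at k2
  have k3 := rank_map_field (algebraMap F K) (A - e • (1 : Matrix _ _ F))
  have k4 : (A - e • (1 : Matrix _ _ F)).map (algebraMap F K)
      = A.map (algebraMap F K) - (x : K) • (1 : Matrix (Fin m ⊕ Fin m) (Fin m ⊕ Fin m) K) := by
    ext i j
    by_cases hij : i = j <;> simp [← hex, Matrix.one_apply, hij, Algebra.algebraMap_eq_smul_one, sub_smul]
  rw [k4] at k3
  simp only [Fintype.card_sum, Fintype.card_fin] at k1 k2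
  omega

open Matrix in
theorem exists_eigen_s8 (F : Type) [Field F] (m : ℕ) (A : Matrix (Fin m ⊕ Fin m) (Fin m ⊕ Fin m) F)
    (hA : A ∈ symplecticGroup (Fin m) F) (s : ℕ) (hs : s = matSupp A) (h1 : 1 ≤ s) (h2 : s < m) :
    ∃ e : F, e * e = 1 ∧
      Module.finrank F (LinearMap.ker (A.mulVecLin - e • LinearMap.id)) + s = 2 * m :=
  exists_eigen_aux F (AlgebraicClosure F) m A hA s _ (fun _ => rfl) hs h1 h2

open Matrix in
theorem ker_inf_range {F n : Type*} [Field F] [Fintype n] [DecidableEq n] (A : Matrix n n F)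
    (N : ℕ) (hN : (N : F) ≠ 0) (hA : A ^ N = 1) (e : F) (he : e ≠ 0) (w : n → F)
    (hu : A *ᵥ (A *ᵥ w - e • w) = e • (A *ᵥ w - e • w)) : A *ᵥ w - e • w = 0 := by
  set u := A *ᵥ w - e • w with hudef
  have hw : A *ᵥ w = e • w + u := by rw [hudef]; abel
  by_contra hu0
  have hpow : ∀ k : ℕ, (A ^ k) *ᵥ u = e ^ k • u := by
    intro k
    induction k with
    | zero => simp
    | succ k ih => rw [pow_succ, ← Matrix.mulVec_mulVec, hu, Matrix.mulVec_smul, ih, smul_smul,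
        pow_succ']
  have hpow2 : ∀ k : ℕ, e • ((A ^ k) *ᵥ w) = e ^ (k + 1) • w + ((k : F) * e ^ k) • u := by
    intro k
    induction k with
    | zero => simp
    | succ k ih =>
      rw [pow_succ', ← Matrix.mulVec_mulVec, ← Matrix.mulVec_smul, ih, Matrix.mulVec_add,
        Matrix.mulVec_smul, Matrix.mulVec_smul, hw, hu]
      push_cast
      module
  have h1 := hpow N
  have h2 := hpow2 N
  rw [hA, Matrix.one_mulVec] at h1 h2
  have heN : e ^ N = 1 := by
    have : (e ^ N - 1) • u = 0 := by rw [sub_smul, one_smul, ← h1, sub_self]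
    rcases smul_eq_zero.1 this with h | h
    · exact sub_eq_zero.1 h
    · exact absurd h hu0
  rw [pow_succ, heN, one_mul, mul_one] at h2
  have h3 : (N : F) • u = 0 := by
    have := sub_eq_zero.2 h2.symm
    simpa using this
  rcases smul_eq_zero.1 h3 with h | h
  · exact hN h
  · exact hu0 h

/-- Matrix action of a subgroup of the symplectic group on column vectors. -/
abbrev sympAction {F : Type} [Field F] {m : ℕ}
    (C : Subgroup (Matrix.symplecticGroup (Fin m) F)) :
    DistribMulAction C (Fin m ⊕ Fin m → F) where
  smul c v := Matrix.mulVec (c : Matrix.symplecticGroup (Fin m) F).1 v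
  one_smul v := Matrix.one_mulVec v
  mul_smul a b v := (Matrix.mulVec_mulVec v a.1.1 b.1.1).symm
  smul_zero a := Matrix.mulVec_zero a.1.1
  smul_add a := Matrix.mulVec_add a.1.1

/-- **Lemma 3.1(i) of Liebeck–Shalev–Tiep (symplectic case).** Let `q = p^f`, `n = 2m`
even, `G = Sp_n(q)`, and `g ∈ G` semisimple (of order prime to `p`) with support
`s = supp(g)` satisfying `1 ≤ s < n/2`. Then `|C_G(g)|_p ≤ q^{((n−s)² + s²)/4}`. -/
theorem centralizer_p_part_bound_small_support (F : Type) [Field F] [Fintype F]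
    (p f : ℕ) (hp : p.Prime) (hf : 0 < f) (hcard : Fintype.card F = p ^ f)
    (m : ℕ) (g : Matrix.symplecticGroup (Fin m) F)
    (hss : Nat.Coprime (orderOf g) p)
    (s : ℕ) (hs : s = matSupp (g : Matrix (Fin m ⊕ Fin m) (Fin m ⊕ Fin m) F))
    (h1 : 1 ≤ s) (h2 : s < m) :
    ((p : ℝ) ^ ((Nat.card
        (Subgroup.centralizer {g} : Subgroup (Matrix.symplecticGroup (Fin m) F))).factorization p))
      ≤ (Fintype.card F : ℝ) ^ ((((2 * m : ℝ) - s) ^ 2 + (s : ℝ) ^ 2) / 4) := by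
  classical
  have : Fact p.Prime := ⟨hp⟩
  have : CharP F p := charP_of_card_eq_prime_pow hcard
  obtain ⟨e, hee, hdim⟩ := exists_eigen_s8 F m g.1 g.2 s hs h1 h2
  have he0 : e ≠ 0 := by rintro rfl; simp at hee
  set C : Subgroup (Matrix.symplecticGroup (Fin m) F) := Subgroup.centralizer {g} with hC
  let _ := sympAction C
  have hsm : ∀ (c : C) (v : Fin m ⊕ Fin m → F), c • v = Matrix.mulVec c.1.1 v := fun _ _ => rfl
  have : SMulCommClass C F (Fin m ⊕ Fin m → F) :=
    ⟨fun c a v => by rw [hsm, hsm, Matrix.mulVec_smul]⟩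
  let P : Sylow p C := default
  have hPcard := P.card_eq_multiplicity
  let B := Matrix.toBilin' (Matrix.J (Fin m) F)
  let T := g.1.mulVecLin - e • (LinearMap.id : (Fin m ⊕ Fin m → F) →ₗ[F] _)
  have hT : ∀ v, T v = Matrix.mulVec g.1 v - e • v := fun v => rfl
  have hTc : ∀ (c : C) (v), T (c • v) = c • T v := by
    intro c v
    have hc : (c : Matrix.symplecticGroup (Fin m) F).1 * g.1 = g.1 * c.1.1 :=
      congrArg Subtype.val (Subgroup.mem_centralizer_singleton_iff.1 c.2)
    rw [hT, hT, hsm, hsm, Matrix.mulVec_sub, Matrix.mulVec_mulVec, Matrix.mulVec_mulVec, hc,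
      Matrix.mulVec_smul]
  have hqdvd : p ∣ Nat.card F := by
    rw [Nat.card_eq_fintype_card, hcard]; exact dvd_pow_self p hf.ne'
  have hinv : ∀ (x : C) (u v), B (x • u) (x • v) = B u v := fun x u v => J_inv' m x.1.1 x.1.2 u v
  have hBalt : ∀ v, B v v = 0 := J_alt m
  -- orthogonality of kernel and range
  have horth : ∀ u, T u = 0 → ∀ w, B u (T w) = 0 := by
    intro u hu w
    have hu' : Matrix.mulVec g.1 u = e • u := sub_eq_zero.1 hu
    have h := J_inv' m g.1 g.2 u w
    rw [hu'] at h
    rw [hT]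
    simp only [B, map_smul, map_sub, LinearMap.smul_apply, smul_eq_mul] at h ⊢
    linear_combination e * h - hee * (Matrix.toBilin' (Matrix.J (Fin m) F)) u
      (Matrix.mulVec g.1 w)
  have hanti : ∀ u v, B u v = - B v u := by
    intro u v
    have := hBalt (u + v)
    simp only [map_add, LinearMap.add_apply, hBalt, zero_add, add_zero] at this
    linear_combination this
  have hN : ((orderOf g : ℕ) : F) ≠ 0 := by
    intro h
    have h' := (CharP.cast_eq_zero_iff F p _).1 h
    have := Nat.Coprime.eq_one_of_dvd hss.symm h'
    exact hp.one_lt.ne' this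
  have hgN : g.1 ^ orderOf g = 1 := congrArg Subtype.val (pow_orderOf_eq_one g)
  have hdisj : LinearMap.ker T ⊓ LinearMap.range T = ⊥ := by
    rw [Submodule.eq_bot_iff]
    rintro _ ⟨hu, w, rfl⟩
    exact ker_inf_range g.1 _ hN hgN e he0 w (sub_eq_zero.1 hu)
  have hrn := LinearMap.finrank_range_add_finrank_ker T
  have hrn' : Module.finrank F (Fin m ⊕ Fin m → F) = 2 * m := by
    rw [Module.finrank_fintype_fun_eq_card]; simp; ring
  have hd1 : Module.finrank F (LinearMap.ker T) + s = 2 * m := hdim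
  have hd2 : Module.finrank F (LinearMap.range T) = s := by omega
  have htop : LinearMap.ker T ⊔ LinearMap.range T = ⊤ := by
    apply Submodule.eq_top_of_finrank_eq
    have := Submodule.finrank_sup_add_finrank_inf_eq (LinearMap.ker T) (LinearMap.range T)
    rw [hdisj, finrank_bot] at this
    omega
  have hdec : ∀ v, ∃ a, T a = 0 ∧ ∃ b, v = a + T b := by
    intro v
    have : v ∈ LinearMap.ker T ⊔ LinearMap.range T := by rw [htop]; trivial
    obtain ⟨a, ha, _, ⟨b, rfl⟩, h⟩ := Submodule.mem_sup.1 this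
    exact ⟨a, ha, b, h.symm⟩
  have hnd : ∀ u, (∀ v, B u v = 0) → u = 0 := fun u hu => (J_nondeg m).1 u hu
  obtain ⟨K1, hK1, hK1fix, hK1c⟩ := pgroup_card_bound p hqdvd B hBalt hinv _
    (LinearMap.ker T) (P : Subgroup C) rfl P.isPGroup'
    (by
      intro x _ w hw
      rw [LinearMap.mem_ker] at hw ⊢
      rw [hTc, hw, smul_zero])
    (by
      intro w hw h
      apply hnd
      intro v
      obtain ⟨a, ha, b, rfl⟩ := hdec v
      rw [map_add, h a ha, horth w hw b, add_zero])
  obtain ⟨K2, hK2, hK2fix, hK2c⟩ := pgroup_card_bound p hqdvd B hBalt hinv _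
    (LinearMap.range T) K1 rfl (P.isPGroup'.to_le hK1)
    (by
      rintro x _ _ ⟨w, rfl⟩
      exact ⟨x • w, hTc x w⟩)
    (by
      intro w hw h
      apply hnd
      intro v
      obtain ⟨a, ha, b, rfl⟩ := hdec v
      obtain ⟨w', rfl⟩ := hw
      rw [map_add, h _ ⟨b, rfl⟩, hanti, horth a ha w', neg_zero, add_zero])
  have hK2bot : K2 = ⊥ := by
    rw [Subgroup.eq_bot_iff_forall]
    intro x hx
    have hxv : ∀ v : Fin m ⊕ Fin m → F, x • v = v := by
      intro v
      obtain ⟨a, ha, b, rfl⟩ := hdec v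
      rw [smul_add, hK1fix x (hK2 hx) a ha, hK2fix x hx _ ⟨b, rfl⟩]
    apply Subtype.ext
    apply Subtype.ext
    apply Matrix.mulVec_injective
    funext v
    exact (hxv v).trans (Matrix.one_mulVec v).symm
  rw [hK2bot, Subgroup.card_bot, one_pow, mul_one, hd2] at hK2c
  have hd1' : Module.finrank F (LinearMap.ker T) = 2 * m - s := by omega
  rw [hd1'] at hK1c
  have hfin : (p ^ (Nat.card C).factorization p) ^ 4 ≤
      Fintype.card F ^ ((2 * m - s) ^ 2 + s ^ 2) := by
    rw [← hPcard, pow_add, ← Nat.card_eq_fintype_card]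
    exact hK1c.trans (Nat.mul_le_mul_left _ hK2c)
  have hq0 : (0 : ℝ) ≤ (Fintype.card F : ℝ) := Nat.cast_nonneg _
  refine le_of_pow_le_pow_left₀ (n := 4) (by norm_num) (Real.rpow_nonneg hq0 _) ?_
  rw [← Real.rpow_natCast (_ ^ (_ : ℝ)) 4, ← Real.rpow_mul hq0]
  have hexp : (((2 * m : ℝ) - s) ^ 2 + (s : ℝ) ^ 2) / 4 * ((4 : ℕ) : ℝ)
      = (((2 * m - s) ^ 2 + s ^ 2 : ℕ) : ℝ) := by
    have : s ≤ 2 * m := by omega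
    push_cast [Nat.cast_sub this]
    ring
  rw [hexp, Real.rpow_natCast]
  exact_mod_cast hfin

end McKayGraphs
end

section
/- Let q = p^f be a prime power, n even, and G = Sp_n(q). Let g ∈ G be semisimple with s = supp(g) satisfying n/2 ≤ s < n. Then the p-part of the order of the centralizer of g in G satisfies |C_G(g)|_p ≤ q^{(n² − ns)/4}. -/
namespace McKayGraphs

section Helpers
open Polynomial Module

section Cyc
variable {F V : Type*} [Field F] [AddCommGroup V] [Module F V]

/-- The cyclic `F[g]`-submodule generated by `v`. -/
noncomputable def cyc (g : End F V) (v : V) : Submodule F V :=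
  LinearMap.range ((LinearMap.applyₗ v).comp (aeval g : F[X] →ₐ[F] End F V).toLinearMap)

lemma mem_cyc {g : End F V} {v x : V} : x ∈ cyc g v ↔ ∃ r : F[X], aeval g r v = x := by
  simp [cyc]

lemma self_mem_cyc (g : End F V) (v : V) : v ∈ cyc g v := mem_cyc.2 ⟨1, by simp⟩

lemma aeval_mem_of_stable {g : End F V} {M : Submodule F V} (hM : ∀ x ∈ M, g x ∈ M)
    (r : F[X]) {x : V} (hx : x ∈ M) : aeval g r x ∈ M := by
  induction r using Polynomial.induction_on' with
  | add p q hp hq => simpa using M.add_mem hp hq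
  | monomial n a =>
    rw [aeval_monomial]
    have : ∀ n : ℕ, (g ^ n) x ∈ M := by
      intro n
      induction n with
      | zero => simpa
      | succ k ih => rw [pow_succ']; exact hM _ ih
    simpa using M.smul_mem a (this n)

lemma cyc_le {g : End F V} {M : Submodule F V} (hM : ∀ x ∈ M, g x ∈ M) {v : V} (hv : v ∈ M) :
    cyc g v ≤ M := by
  intro x hx
  obtain ⟨r, rfl⟩ := mem_cyc.1 hx
  exact aeval_mem_of_stable hM r hv

lemma cyc_stable {g : End F V} {v : V} : ∀ x ∈ cyc g v, g x ∈ cyc g v := by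
  intro x hx
  obtain ⟨r, rfl⟩ := mem_cyc.1 hx
  exact mem_cyc.2 ⟨X * r, by simp⟩

lemma ker_stable (g : End F V) (φ : F[X]) : ∀ x ∈ LinearMap.ker (aeval g φ),
    g x ∈ LinearMap.ker (aeval g φ) := by
  intro x hx
  rw [LinearMap.mem_ker] at *
  have h : aeval g φ * g = g * aeval g φ := by
    conv_lhs => rw [← aeval_X (R := F) g, aeval_X]
    have := congrArg (aeval g) (mul_comm φ (X : F[X]))
    simpa using this
  have := congrArg (fun T : End F V => T x) h
  simpa [hx] using this

lemma cyc_simple {g : End F V} {φ : F[X]} (hφ : Irreducible φ) {v : V} (hv : aeval g φ v = 0)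
    {M : Submodule F V} (hM : ∀ x ∈ M, g x ∈ M) {x : V} (hx : x ∈ cyc g v) (hx0 : x ≠ 0)
    (hxM : x ∈ M) : cyc g v ≤ M := by
  apply cyc_le hM
  obtain ⟨r, rfl⟩ := mem_cyc.1 hx
  have hnd : ¬ φ ∣ r := by
    rintro ⟨t, rfl⟩
    apply hx0
    rw [mul_comm, map_mul, Module.End.mul_apply, hv, map_zero]
  obtain ⟨a, b, hab⟩ := (hφ.coprime_iff_not_dvd.2 hnd)
  have : v = aeval g b (aeval g r v) := by
    have := congrArg (fun s => aeval g s v) hab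
    simp only [map_add, map_mul, LinearMap.add_apply, Module.End.mul_apply, hv, map_zero, zero_add,
      map_one, Module.End.one_apply] at this
    exact this.symm
  rw [this]
  exact aeval_mem_of_stable hM b hxM

lemma natDegree_le_finrank_cyc [FiniteDimensional F V] {g : End F V} {φ : F[X]}
    (hφ : Irreducible φ) {v : V} (hv0 : v ≠ 0) (hv : aeval g φ v = 0) :
    φ.natDegree ≤ finrank F (cyc g v) := by
  have e := degreeLTEquiv F φ.natDegree
  have h1 : finrank F (degreeLT F φ.natDegree) = φ.natDegree := by
    rw [e.finrank_eq]; simp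
  rw [← h1]
  let T : F[X] →ₗ[F] cyc g v :=
    LinearMap.rangeRestrict ((LinearMap.applyₗ v).comp (aeval g : F[X] →ₐ[F] End F V).toLinearMap)
  apply LinearMap.finrank_le_finrank_of_injective (f := T.comp (degreeLT F φ.natDegree).subtype)
  rw [injective_iff_map_eq_zero]
  rintro ⟨r, hr⟩ hr0
  have hr0 : aeval g r v = 0 := congrArg Subtype.val hr0
  ext1
  by_contra hne
  simp only [ZeroMemClass.coe_zero] at hne
  have hnd : ¬ φ ∣ r := by
    intro hd
    have h2 := Polynomial.degree_le_of_dvd hd hne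
    rw [mem_degreeLT, ← degree_eq_natDegree hφ.ne_zero] at hr
    exact absurd h2 (not_le.2 hr)
  obtain ⟨a, b, hab⟩ := (hφ.coprime_iff_not_dvd.2 hnd)
  apply hv0
  have := congrArg (fun s => aeval g s v) hab
  simpa [hv, hr0] using this.symm

/-- Adjoint of polynomial. -/
lemma adj_aeval {B : LinearMap.BilinForm F V} {g g' : End F V}
    (h : ∀ x y, B (g x) y = B x (g' y)) (r : F[X]) :
    ∀ x y, B (aeval g r x) y = B x (aeval g' r y) := by
  have hp : ∀ (n : ℕ) x y, B ((g ^ n) x) y = B x ((g' ^ n) y) := by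
    intro n
    induction n with
    | zero => simp
    | succ k ih =>
      intro x y
      rw [pow_succ', pow_succ, Module.End.mul_apply, Module.End.mul_apply, h, ih]
  induction r using Polynomial.induction_on' with
  | add p q hp hq => intro x y; simp [hp, hq]
  | monomial n a => intro x y; simp [aeval_monomial, hp]

/-- decomposition into primary parts. -/
lemma iSup_ker_eq (g : End F V) (S : Finset F[X]) (hS : ∀ φ ∈ S, ∀ ψ ∈ S, φ ≠ ψ → IsCoprime φ ψ) :
    (⨆ φ ∈ S, LinearMap.ker (aeval g φ)) = LinearMap.ker (aeval g (∏ φ ∈ S, φ)) := by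
  classical
  induction S using Finset.induction_on with
  | empty =>
    simp only [Finset.notMem_empty, not_false_eq_true, iSup_neg, iSup_bot, Finset.prod_empty, map_one]
    symm; rw [Module.End.one_eq_id, LinearMap.ker_id]
  | insert a s ha ih =>
    rw [Finset.iSup_insert, ih (fun φ hφ ψ hψ => hS φ (by simp [hφ]) ψ (by simp [hψ])),
      Finset.prod_insert ha]
    apply sup_ker_aeval_eq_ker_aeval_mul_of_coprime
    apply IsCoprime.prod_right
    intro i hi
    exact hS a (by simp) i (by simp [hi]) (by rintro rfl; exact ha hi)

lemma sum_finrank_ker (g : End F V) [FiniteDimensional F V] (S : Finset F[X])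
    (hS : ∀ φ ∈ S, ∀ ψ ∈ S, φ ≠ ψ → IsCoprime φ ψ) :
    ∑ φ ∈ S, finrank F (LinearMap.ker (aeval g φ)) ≤
      finrank F (LinearMap.ker (aeval g (∏ φ ∈ S, φ))) := by
  classical
  induction S using Finset.induction_on with
  | empty => simp
  | insert a s ha ih =>
    have ih := ih (fun φ hφ ψ hψ => hS φ (by simp [hφ]) ψ (by simp [hψ]))
    have hc : IsCoprime a (∏ φ ∈ s, φ) := by
      apply IsCoprime.prod_right
      intro i hi
      exact hS a (by simp) i (by simp [hi]) (by rintro rfl; exact ha hi)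
    rw [Finset.prod_insert ha, Finset.sum_insert ha,
      ← sup_ker_aeval_eq_ker_aeval_mul_of_coprime g hc]
    have h1 := Submodule.finrank_sup_add_finrank_inf_eq (LinearMap.ker (aeval g a))
      (LinearMap.ker (aeval g (∏ φ ∈ s, φ)))
    rw [(disjoint_ker_aeval_of_isCoprime g hc).eq_bot, finrank_bot] at h1
    omega

lemma finrank_add_le_of_disjoint [FiniteDimensional F V] {A B C : Submodule F V}
    (h : Disjoint A B) (hA : A ≤ C) (hB : B ≤ C) : finrank F A + finrank F B ≤ finrank F C := by
  have h1 := Submodule.finrank_sup_add_finrank_inf_eq A B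
  rw [h.eq_bot, finrank_bot, add_zero] at h1
  rw [← h1]
  exact Submodule.finrank_mono (sup_le hA hB)

lemma comm_aeval {T g : End F V} (h : Commute T g) (r : F[X]) : Commute T (aeval g r) := by
  induction r using Polynomial.induction_on' with
  | add p q hp hq => rw [map_add]; exact hp.add_right hq
  | monomial n a =>
    rw [aeval_monomial]
    exact (Algebra.commute_algebraMap_right a T).mul_right (h.pow_right n)

end Cyc

section Main

/-- The inductive claim in dimension `n`. -/
def GoodDim (F : Type) [Field F] (p N : ℕ) (S : Finset F[X]) (n : ℕ) : Prop :=
  ∀ (V : Type) [AddCommGroup V] [Module F V] [FiniteDimensional F V], finrank F V = n →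
  ∀ (B : LinearMap.BilinForm F V), B.Nondegenerate → B.IsRefl →
  ∀ (g : End F V), g ^ N = 1 → (∀ x y, B (g x) (g y) = B x y) →
  ∀ (P : Type) [Group P] [Finite P], IsPGroup p P →
  ∀ (ρ : P →* End F V), Function.Injective ρ → (∀ h x, ρ h (g x) = g (ρ h x)) →
    (∀ h x y, B (ρ h x) (ρ h y) = B x y) →
  4 * Real.logb (Nat.card F) (Nat.card P) ≤
    ∑ φ ∈ S, (finrank F (LinearMap.ker (aeval g φ)) : ℝ) ^ 2 / φ.natDegree

variable {F V : Type} [Field F] [AddCommGroup V] [Module F V]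

lemma aeval_restrict_coe {g : End F V} {U : Submodule F V} (hU : ∀ x ∈ U, g x ∈ U) (φ : F[X])
    (x : U) : ((aeval (LinearMap.restrict g hU : End F U) φ x : U) : V) = aeval g φ (x : V) := by
  have hp : ∀ (n : ℕ) (x : U), (((LinearMap.restrict g hU : End F U) ^ n) x : V)
      = (g ^ n) (x : V) := by
    intro n
    induction n with
    | zero => simp
    | succ k ih =>
      intro x
      rw [pow_succ, pow_succ, Module.End.mul_apply, Module.End.mul_apply, ih]; rfl
  induction φ using Polynomial.induction_on' with
  | add p q hp hq => simp [hp, hq]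
  | monomial n a => simp [aeval_monomial, hp]

lemma finrank_ker_restrict [FiniteDimensional F V] {g : End F V} {U : Submodule F V}
    (hU : ∀ x ∈ U, g x ∈ U) (φ : F[X]) :
    finrank F (LinearMap.ker (aeval (LinearMap.restrict g hU : End F U) φ)) =
      finrank F (U ⊓ LinearMap.ker (aeval g φ) : Submodule F V) := by
  rw [← Submodule.finrank_map_subtype_eq U]
  suffices h : Submodule.map U.subtype
      (LinearMap.ker (aeval (LinearMap.restrict g hU : End F U) φ)) =
      U ⊓ LinearMap.ker (aeval g φ) by rw [h]
  ext x
  simp only [Submodule.mem_map, LinearMap.mem_ker, Submodule.mem_inf]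
  constructor
  · rintro ⟨y, hy, rfl⟩
    refine ⟨y.2, ?_⟩
    have := congrArg Subtype.val hy
    rw [aeval_restrict_coe] at this
    simpa using this
  · rintro ⟨h1, h2⟩
    refine ⟨⟨x, h1⟩, ?_, rfl⟩
    ext
    rw [aeval_restrict_coe]
    simpa using h2

lemma orth_stable [FiniteDimensional F V] {B : LinearMap.BilinForm F V} {g : End F V}
    (hg : ∀ x y, B (g x) (g y) = B x y) {N : ℕ} (hN : 0 < N) (hgN : g ^ N = 1)
    {W : Submodule F V} (hW : ∀ x ∈ W, g x ∈ W) :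
    ∀ x ∈ B.orthogonal W, g x ∈ B.orthogonal W := by
  intro x hx
  rw [LinearMap.BilinForm.mem_orthogonal_iff] at *
  intro w hw
  have h1 : w = g ((g ^ (N - 1)) w) := by
    rw [← Module.End.mul_apply, ← pow_succ', Nat.sub_add_cancel hN, hgN]; rfl
  have h2 : (g ^ (N - 1)) w ∈ W := by
    have := aeval_mem_of_stable hW (X ^ (N - 1)) hw
    simpa using this
  show B w (g x) = 0
  rw [h1, hg]
  exact hx _ h2

lemma restrict_step [FiniteDimensional F V] {p N : ℕ} {S : Finset F[X]} (hN : 0 < N)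
    (IH : ∀ k < finrank F V, GoodDim F p N S k)
    {B : LinearMap.BilinForm F V} (hB : B.Nondegenerate) (hR : B.IsRefl)
    {g : End F V} (hgN : g ^ N = 1) (hg : ∀ x y, B (g x) (g y) = B x y)
    {P : Type} [Group P] [Finite P] (hP : IsPGroup p P)
    {ρ : P →* End F V} (hinj : Function.Injective ρ) (hcomm : ∀ h x, ρ h (g x) = g (ρ h x))
    (hiso : ∀ h x y, B (ρ h x) (ρ h y) = B x y)
    {W : Submodule F V} (hW0 : W ≠ ⊥) (hW : ∀ x ∈ W, g x ∈ W) (hd : Disjoint W (B.orthogonal W))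
    (H : Subgroup P) (hH : ∀ h ∈ H, ∀ x ∈ W, ρ h x = x) :
    4 * Real.logb (Nat.card F) (Nat.card H) ≤
    ∑ φ ∈ S, (finrank F (B.orthogonal W ⊓ LinearMap.ker (aeval g φ) : Submodule F V) : ℝ) ^ 2
      / φ.natDegree := by
  set U := B.orthogonal W with hU
  have hc : IsCompl W U :=
    (LinearMap.BilinForm.isCompl_orthogonal_iff_disjoint hR).2 hd
  have hUg : ∀ x ∈ U, g x ∈ U := orth_stable hg hN hgN hW
  have hUH : ∀ h ∈ H, ∀ x ∈ U, ρ h x ∈ U := by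
    intro h hh x hx
    rw [hU, LinearMap.BilinForm.mem_orthogonal_iff] at *
    intro w hw
    show B w (ρ h x) = 0
    rw [← hH h hh w hw, hiso]
    exact hx w hw
  have hlt : finrank F U < finrank F V := by
    have h1 := Submodule.finrank_add_eq_of_isCompl hc
    have h2 : 0 < finrank F W := by
      rw [Nat.pos_iff_ne_zero, Ne, Submodule.finrank_eq_zero]; exact hW0
    omega
  let ρ' : H →* End F U :=
    { toFun := fun h => LinearMap.restrict (ρ h) (hUH h h.2)
      map_one' := by ext x; simp
      map_mul' := by intro a b; ext x; simp }
  have hρ' : ∀ h x, ((ρ' h x : U) : V) = ρ h x := fun _ _ => rfl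
  have hUd : Disjoint U (B.orthogonal U) := by
    rw [hU, LinearMap.BilinForm.orthogonal_orthogonal hB hR]; exact hd.symm
  have key := IH _ hlt U rfl (B.restrict U)
    (LinearMap.BilinForm.nondegenerate_restrict_of_disjoint_orthogonal B hR hUd)
    (fun x y h => hR _ _ h) (LinearMap.restrict g hUg) ?_ (fun x y => hg _ _) H
    (hP.to_subgroup H) ρ' ?_ ?_ (fun h x y => hiso _ _ _)
  · simpa only [finrank_ker_restrict] using key
  · ext x
    have := aeval_restrict_coe hUg (X ^ N) x
    simpa [hgN] using this
  · intro a b hab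
    ext1
    apply hinj
    ext x
    obtain ⟨y, hy, z, hz, rfl⟩ := Submodule.mem_sup.1
      (hc.sup_eq_top ▸ Submodule.mem_top : x ∈ W ⊔ U)
    rw [map_add, map_add, hH a a.2 y hy, hH b b.2 y hy]
    have := congrArg (fun T : End F U => ((T ⟨z, hz⟩ : U) : V)) hab
    simp only [hρ'] at this
    rw [this]
  · intro h x
    ext
    exact hcomm _ _

lemma exists_fixed_s9 [FiniteDimensional F V] [Finite F] {p : ℕ} [Fact p.Prime] (hpq : p ∣ Nat.card F)
    {P : Type} [Group P] [Finite P] (hP : IsPGroup p P)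
    (ρ : P →* End F V) (K : Submodule F V) (hK : ∀ h, ∀ x ∈ K, ρ h x ∈ K) (hK0 : K ≠ ⊥) :
    ∃ v ∈ K, v ≠ 0 ∧ ∀ h, ρ h v = v := by
  have : Finite V := Module.finite_of_finite F
  let _ : MulAction P K :=
    { smul := fun h x => ⟨ρ h x, hK h x x.2⟩
      one_smul := fun x => by
        ext
        show ρ 1 (x : V) = x
        simp
      mul_smul := fun a b x => by
        ext
        show ρ (a * b) (x : V) = ρ a (ρ b x)
        simp }
  have hdef : ∀ (h : P) (x : K), ((h • x : K) : V) = ρ h x := fun _ _ => rfl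
  have hdvd : p ∣ Nat.card K := by
    rw [Module.natCard_eq_pow_finrank (K := F)]
    exact hpq.trans (dvd_pow_self _ (by rwa [Ne, Submodule.finrank_eq_zero]))
  obtain ⟨b, hb, hb0⟩ := hP.exists_fixed_point_of_prime_dvd_card_of_fixed_point K hdvd (a := 0)
    (by intro h; ext; rw [hdef]; simp)
  refine ⟨b, b.2, fun h => hb0 (by ext; simp [h]), fun h => ?_⟩
  rw [← hdef, hb h]

lemma orbit_bound [FiniteDimensional F V] [Finite F]
    {P : Type} [Group P] [Finite P] (ρ : P →* End F V) (M : Submodule F V) (w : V)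
    (hw : ∀ h, ρ h w - w ∈ M) :
    ∃ H : Subgroup P, (∀ h ∈ H, ρ h w = w) ∧
      Nat.card P ≤ Nat.card F ^ (finrank F M) * Nat.card H := by
  have : Finite V := Module.finite_of_finite F
  let _ : MulAction P V := MulAction.compHom V ρ
  have hdef : ∀ (h : P) (x : V), h • x = ρ h x := fun _ _ => rfl
  refine ⟨MulAction.stabilizer P w, fun h hh => hh, ?_⟩
  rw [← Module.natCard_eq_pow_finrank (K := F),
    Nat.card_congr (MulAction.orbitProdStabilizerEquivGroup P w).symm, Nat.card_prod]
  apply Nat.mul_le_mul_right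
  apply Nat.card_le_card_of_injective
    (f := fun x : MulAction.orbit P w => (⟨(x : V) - w, by
      obtain ⟨x, h, rfl⟩ := x
      exact hw h⟩ : M))
  intro x y hxy
  have := congrArg Subtype.val hxy
  ext
  simpa using this

lemma kappa_le [FiniteDimensional F V] {N : ℕ} (hN : 0 < N)
    {B : LinearMap.BilinForm F V} (hB : B.Nondegenerate)
    {g : End F V} (hgN : g ^ N = 1) (hg : ∀ x y, B (g x) (g y) = B x y)
    {φ ψ : F[X]} (hψ : Irreducible ψ) {v w : V} (hv : aeval g φ v = 0) (hw : aeval g ψ w = 0)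
    (hvw : B v w ≠ 0) :
    finrank F (LinearMap.ker (aeval g ψ)) ≤ finrank F (LinearMap.ker (aeval g φ)) := by
  have hadj : ∀ x y, B (g x) y = B x ((g ^ (N - 1)) y) := by
    intro x y
    rw [← hg x, ← Module.End.mul_apply, ← pow_succ', Nat.sub_add_cancel hN, hgN]; rfl
  have hadj' := adj_aeval hadj φ
  have hχ : aeval g (φ.comp (X ^ (N - 1))) = aeval (g ^ (N - 1)) φ := by
    rw [aeval_comp]; simp
  have hdvd : ψ ∣ φ.comp (X ^ (N - 1)) := by
    by_contra hnd
    obtain ⟨a, b, hab⟩ := (hψ.coprime_iff_not_dvd.2 hnd)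
    apply hvw
    have h1 : w = aeval (g ^ (N - 1)) φ (aeval g b w) := by
      have := congrArg (fun s => aeval g s w) hab
      rw [mul_comm b] at this
      simp only [map_add, map_mul, LinearMap.add_apply, Module.End.mul_apply, hw, map_zero,
        zero_add, map_one, Module.End.one_apply, hχ] at this
      exact this.symm
    rw [h1, ← hadj', hv]; simp
  have h1 : LinearMap.ker (aeval g ψ) ≤ B.orthogonal (LinearMap.range (aeval g φ)) := by
    intro y hy
    rw [LinearMap.BilinForm.mem_orthogonal_iff]
    rintro _ ⟨x, rfl⟩
    show B _ _ = 0
    rw [hadj', ← hχ]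
    obtain ⟨t, ht⟩ := hdvd
    rw [ht, mul_comm, map_mul, Module.End.mul_apply, LinearMap.mem_ker.1 hy]; simp
  have h2 := Submodule.finrank_mono h1
  rw [LinearMap.BilinForm.finrank_orthogonal hB] at h2
  have h3 := LinearMap.finrank_range_add_finrank_ker (aeval g φ)
  omega

lemma arith {S : Finset F[X]} {k c : F[X] → ℕ} (hpos : ∀ θ ∈ S, 0 < θ.natDegree)
    (hck : ∀ θ, c θ ≤ k θ) {φ ψ : F[X]} (hφ : φ ∈ S) (hψ : ψ ∈ S) {a : ℕ}
    (hφa : φ.natDegree ≤ a) (hψa : ψ.natDegree ≤ a) (hk : k ψ ≤ k φ)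
    (h1 : φ ≠ ψ → c φ + a ≤ k φ) (h2 : φ ≠ ψ → c ψ + a ≤ k ψ) (h3 : φ = ψ → c φ + 2 * a ≤ k φ) :
    ∑ θ ∈ S, (c θ : ℝ) ^ 2 / θ.natDegree + 4 * ((k ψ : ℝ) - a) ≤
      ∑ θ ∈ S, (k θ : ℝ) ^ 2 / θ.natDegree := by
  classical
  rw [← le_sub_iff_add_le', ← Finset.sum_sub_distrib]
  have hnn : ∀ θ ∈ S, 0 ≤ (k θ : ℝ) ^ 2 / θ.natDegree - (c θ : ℝ) ^ 2 / θ.natDegree := by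
    intro θ _
    rw [← sub_div]
    apply div_nonneg _ (Nat.cast_nonneg _)
    rw [sub_nonneg]
    have : (c θ : ℝ) ≤ k θ := by exact_mod_cast hck θ
    gcongr
  have hsub : ({φ, ψ} : Finset F[X]) ⊆ S := by
    intro x hx; simp at hx; rcases hx with rfl | rfl <;> assumption
  refine le_trans ?_ (Finset.sum_le_sum_of_subset_of_nonneg hsub (fun θ h _ => hnn θ h))
  have hkR : (k ψ : ℝ) ≤ k φ := by exact_mod_cast hk
  have ha0 : (0 : ℝ) ≤ a := Nat.cast_nonneg _
  by_cases h : φ = ψ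
  · subst h
    have h3 : (c φ : ℝ) + 2 * a ≤ k φ := by exact_mod_cast h3 rfl
    have e0 : (0 : ℝ) < φ.natDegree := by exact_mod_cast hpos φ hφ
    have ea : (φ.natDegree : ℝ) ≤ a := by exact_mod_cast hφa
    have c0 : (0 : ℝ) ≤ c φ := Nat.cast_nonneg _
    simp only [Finset.pair_eq_singleton, Finset.sum_singleton]
    rw [← sub_div, le_div_iff₀ e0]
    have : (c φ : ℝ) ^ 2 ≤ (k φ - 2 * a) ^ 2 := by
      apply pow_le_pow_left₀ c0; linarith
    have : 4 * ((k φ : ℝ) - a) * φ.natDegree ≤ 4 * ((k φ : ℝ) - a) * a := by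
      apply mul_le_mul_of_nonneg_left ea; linarith
    nlinarith
  · have h1 : (c φ : ℝ) + a ≤ k φ := by exact_mod_cast h1 h
    have h2 : (c ψ : ℝ) + a ≤ k ψ := by exact_mod_cast h2 h
    rw [Finset.sum_pair h]
    have gen : ∀ θ ∈ S, θ.natDegree ≤ a → (c θ : ℝ) + a ≤ k θ →
        2 * (k θ : ℝ) - a ≤ (k θ : ℝ) ^ 2 / θ.natDegree - (c θ : ℝ) ^ 2 / θ.natDegree := by
      intro θ hθ hθa hc
      have e0 : (0 : ℝ) < θ.natDegree := by exact_mod_cast hpos θ hθ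
      have ea : (θ.natDegree : ℝ) ≤ a := by exact_mod_cast hθa
      have c0 : (0 : ℝ) ≤ c θ := Nat.cast_nonneg _
      rw [← sub_div, le_div_iff₀ e0]
      have : (c θ : ℝ) ^ 2 ≤ (k θ - a) ^ 2 := by
        apply pow_le_pow_left₀ c0; linarith
      have : (2 * (k θ : ℝ) - a) * θ.natDegree ≤ (2 * (k θ : ℝ) - a) * a := by
        apply mul_le_mul_of_nonneg_left ea; linarith
      nlinarith
    have := gen φ hφ hφa h1
    have := gen ψ hψ hψa h2
    linarith

theorem goodDim_all [Finite F] {p N : ℕ} [Fact p.Prime] (hpq : p ∣ Nat.card F) (hN : 0 < N)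
    {S : Finset F[X]} (hirr : ∀ φ ∈ S, Irreducible φ)
    (hcop : ∀ φ ∈ S, ∀ ψ ∈ S, φ ≠ ψ → IsCoprime φ ψ)
    (hprod : ∏ φ ∈ S, φ = X ^ N - 1) : ∀ n, GoodDim F p N S n := by
  intro n
  induction n using Nat.strong_induction_on with
  | _ n IH =>
  intro V _ _ _ hn B hB hR g hgN hg P _ _ hP ρ hinj hcomm hiso
  subst hn
  have hq : (1 : ℝ) < Nat.card F := by exact_mod_cast Finite.one_lt_card
  have hpos : ∀ θ ∈ S, 0 < θ.natDegree := fun θ hθ => (hirr θ hθ).natDegree_pos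
  have hsup : (⨆ φ ∈ S, LinearMap.ker (aeval g φ)) = ⊤ := by
    rw [iSup_ker_eq g S hcop, hprod]
    simp [hgN]
  rcases subsingleton_or_nontrivial V with hV | hV
  · have : Subsingleton P := hinj.subsingleton
    have h1 : Nat.card P = 1 := Nat.card_eq_one_iff_unique.2 ⟨this, ⟨1⟩⟩
    rw [h1]
    simp only [Nat.cast_one, Real.logb_one, mul_zero]
    apply Finset.sum_nonneg
    intro i _
    positivity
  -- choose an eigen-component
  obtain ⟨φ, hφS, hφ0⟩ : ∃ φ ∈ S, LinearMap.ker (aeval g φ) ≠ ⊥ := by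
    by_contra hcon
    push Not at hcon
    have : (⨆ φ ∈ S, LinearMap.ker (aeval g φ)) = ⊥ := by
      simp only [iSup_eq_bot]; exact hcon
    rw [hsup] at this
    exact top_ne_bot this
  have hρker : ∀ (θ : F[X]) h, ∀ x ∈ LinearMap.ker (aeval g θ),
      ρ h x ∈ LinearMap.ker (aeval g θ) := by
    intro θ h x hx
    rw [LinearMap.mem_ker] at *
    have hc : Commute (ρ h) (aeval g θ) := by
      have : Commute (ρ h) g := by ext x; exact hcomm h x
      exact comm_aeval this θ
    have := congrArg (fun T : End F V => T x) hc.eq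
    simp only [Module.End.mul_apply, hx, map_zero] at this
    exact this.symm
  obtain ⟨v, hvK, hv0, hvP⟩ := exists_fixed_s9 hpq hP ρ _ (hρker φ) hφ0
  rw [LinearMap.mem_ker] at hvK
  have hφ := hirr φ hφS
  set L := cyc g v with hL
  have hLP : ∀ h, ∀ x ∈ L, ρ h x = x := by
    intro h x hx
    obtain ⟨r, rfl⟩ := mem_cyc.1 hx
    have hc : Commute (ρ h) (aeval g r) := by
      have : Commute (ρ h) g := by ext x; exact hcomm h x
      exact comm_aeval this r
    have := congrArg (fun T : End F V => T v) hc.eq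
    simpa only [Module.End.mul_apply, hvP] using this
  have hL0 : L ≠ ⊥ := fun h => hv0 (by
    have := self_mem_cyc g v
    rw [← hL, h] at this; simpa using this)
  have hLker : L ≤ LinearMap.ker (aeval g φ) := cyc_le (ker_stable g φ) hvK
  have hLdeg : φ.natDegree ≤ finrank F L := natDegree_le_finrank_cyc hφ hv0 hvK
  have hLs : ∀ x ∈ L, g x ∈ L := cyc_stable
  by_cases hd : Disjoint L (B.orthogonal L)
  · have key := restrict_step hN IH hB hR hgN hg hP hinj hcomm hiso hL0 hLs hd ⊤
      (fun h _ => hLP h)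
    rw [Subgroup.card_top] at key
    refine key.trans (Finset.sum_le_sum fun θ _ => ?_)
    gcongr
    exact Submodule.finrank_mono inf_le_right
  have hLiso : L ≤ B.orthogonal L := by
    rw [Submodule.disjoint_def] at hd
    push Not at hd
    obtain ⟨x, hx, hx', hx0⟩ := hd
    exact cyc_simple hφ hvK (orth_stable hg hN hgN hLs) hx hx0 hx'
  obtain ⟨ψ, hψS, w, hwK, hvw⟩ : ∃ ψ ∈ S, ∃ w, aeval g ψ w = 0 ∧ B v w ≠ 0 := by
    by_contra hcon
    push Not at hcon
    have h1 : (⨆ φ ∈ S, LinearMap.ker (aeval g φ)) ≤ LinearMap.ker (B v) := by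
      refine iSup₂_le fun θ hθ x hx => ?_
      exact hcon θ hθ x hx
    rw [hsup] at h1
    exact hv0 (hB.1 v fun y => h1 (Submodule.mem_top (x := y)))
  have hψ := hirr ψ hψS
  have hw0 : w ≠ 0 := by rintro rfl; simp at hvw
  set L' := cyc g w with hL'
  have hL's : ∀ x ∈ L', g x ∈ L' := cyc_stable
  have hL'ker : L' ≤ LinearMap.ker (aeval g ψ) := cyc_le (ker_stable g ψ) hwK
  have hL'deg : ψ.natDegree ≤ finrank F L' := natDegree_le_finrank_cyc hψ hw0 hwK
  have hd1 : Disjoint L' (B.orthogonal L) := by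
    rw [Submodule.disjoint_def]
    intro x hx hx'
    by_contra hx0
    exact hvw (cyc_simple hψ hwK (orth_stable hg hN hgN hLs) hx hx0 hx' (self_mem_cyc g w) v
      (self_mem_cyc g v))
  have hd2 : Disjoint L (B.orthogonal L') := by
    rw [Submodule.disjoint_def]
    intro x hx hx'
    by_contra hx0
    exact hvw (hR _ _ (cyc_simple hφ hvK (orth_stable hg hN hgN hL's) hx hx0 hx'
      (self_mem_cyc g v) w (self_mem_cyc g w)))
  have hdim : finrank F L = finrank F L' := by
    have e1 := finrank_add_le_of_disjoint hd1 le_top le_top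
    have e2 := finrank_add_le_of_disjoint hd2 le_top le_top
    rw [LinearMap.BilinForm.finrank_orthogonal hB, finrank_top] at e1 e2
    have := Submodule.finrank_le L
    have := Submodule.finrank_le L'
    omega
  have hdLL' : Disjoint L L' := hd1.symm.mono_left hLiso
  have hWs : ∀ x ∈ L ⊔ L', g x ∈ L ⊔ L' := by
    intro x hx
    obtain ⟨y, hy, z, hz, rfl⟩ := Submodule.mem_sup.1 hx
    rw [map_add]
    exact Submodule.add_mem_sup (hLs y hy) (hL's z hz)
  have hWd : Disjoint (L ⊔ L') (B.orthogonal (L ⊔ L')) := by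
    rw [Submodule.disjoint_def]
    intro x hx hx'
    obtain ⟨y, hy, z, hz, rfl⟩ := Submodule.mem_sup.1 hx
    have hz0 : z = 0 := by
      apply (Submodule.disjoint_def.1 hd1) z hz
      intro t ht
      have e1 : B t (y + z) = 0 := hx' t (Submodule.mem_sup_left ht)
      have e2 : B t y = 0 := hLiso hy t ht
      rw [map_add, e2, zero_add] at e1
      exact e1
    subst hz0
    rw [add_zero] at hx' ⊢
    apply (Submodule.disjoint_def.1 hd2) y hy
    intro t ht
    exact hx' t (Submodule.mem_sup_right ht)
  have hW0 : L ⊔ L' ≠ ⊥ := fun h => hL0 (by rw [eq_bot_iff, ← h]; exact le_sup_left)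
  -- orbit of w
  obtain ⟨H, hHw, hHcard⟩ := orbit_bound ρ (LinearMap.ker (aeval g ψ) ⊓ B.orthogonal L) w (by
    intro h
    refine Submodule.mem_inf.2 ⟨Submodule.sub_mem _ (hρker ψ h w hwK) hwK, ?_⟩
    intro t ht
    show B t _ = 0
    rw [map_sub, sub_eq_zero]
    nth_rewrite 1 [← hLP h t ht]
    exact hiso h t w)
  have hHW : ∀ h ∈ H, ∀ x ∈ L ⊔ L', ρ h x = x := by
    intro h hh x hx
    obtain ⟨y, hy, z, hz, rfl⟩ := Submodule.mem_sup.1 hx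
    obtain ⟨r, rfl⟩ := mem_cyc.1 hz
    have hc : Commute (ρ h) (aeval g r) := by
      have : Commute (ρ h) g := by ext x; exact hcomm h x
      exact comm_aeval this r
    have := congrArg (fun T : End F V => T w) hc.eq
    simp only [Module.End.mul_apply, hHw h hh] at this
    rw [map_add, hLP h y hy, this]
  have key := restrict_step hN IH hB hR hgN hg hP hinj hcomm hiso hW0 hWs hWd H hHW
  have horb := finrank_add_le_of_disjoint (C := LinearMap.ker (aeval g ψ))
    (A := LinearMap.ker (aeval g ψ) ⊓ B.orthogonal L) (B := L')
    (hd1.symm.mono_left inf_le_right) inf_le_left hL'ker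
  have hA := arith (k := fun θ => finrank F (LinearMap.ker (aeval g θ)))
    (c := fun θ => finrank F (B.orthogonal (L ⊔ L') ⊓ LinearMap.ker (aeval g θ) : Submodule F V))
    hpos (fun θ => Submodule.finrank_mono inf_le_right) hφS hψS hLdeg (hdim ▸ hL'deg)
    (kappa_le hN hB hgN hg hψ hvK hwK hvw)
    (fun _ => finrank_add_le_of_disjoint
      (hWd.symm.mono inf_le_left le_sup_left) inf_le_right hLker)
    (fun _ => hdim ▸ finrank_add_le_of_disjoint
      (hWd.symm.mono inf_le_left le_sup_right) inf_le_right hL'ker)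
    (fun hEq => by
      have e := finrank_add_le_of_disjoint (hWd.symm.mono
        (inf_le_left (b := LinearMap.ker (aeval g φ))) le_rfl)
        inf_le_right (sup_le hLker (hEq ▸ hL'ker))
      have e' := Submodule.finrank_sup_add_finrank_inf_eq L L'
      rw [hdLL'.eq_bot, finrank_bot] at e'
      show finrank F (B.orthogonal (L ⊔ L') ⊓ LinearMap.ker (aeval g φ) : Submodule F V)
        + 2 * finrank F L ≤ finrank F (LinearMap.ker (aeval g φ))
      omega)
  refine le_trans ?_ hA
  have hlog : Real.logb (Nat.card F) (Nat.card P) ≤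
      ((finrank F (LinearMap.ker (aeval g ψ)) : ℝ) - finrank F L)
        + Real.logb (Nat.card F) (Nat.card H) := by
    have hP0 : (0 : ℝ) < Nat.card P := by exact_mod_cast Nat.card_pos
    have hH0 : (0 : ℝ) < Nat.card H := by exact_mod_cast Nat.card_pos
    have hle : (Nat.card P : ℝ) ≤ (Nat.card F : ℝ) ^
        (finrank F (LinearMap.ker (aeval g ψ) ⊓ B.orthogonal L : Submodule F V)) * Nat.card H := by
      exact_mod_cast hHcard
    have e1 := Real.logb_le_logb_of_le hq hP0 hle
    rw [Real.logb_mul (by positivity) hH0.ne', Real.logb_pow, Real.logb_self_eq_one hq,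
      mul_one] at e1
    have e2 : (finrank F (LinearMap.ker (aeval g ψ) ⊓ B.orthogonal L : Submodule F V) : ℝ)
        + finrank F L ≤ finrank F (LinearMap.ker (aeval g ψ)) := by
      rw [hdim]; exact_mod_cast horb
    linarith
  linarith

end Main

section Final

lemma finrank_ker_mul_le {K V : Type*} [Field K] [AddCommGroup V] [Module K V]
    [FiniteDimensional K V] (f h : End K V) :
    finrank K (LinearMap.ker (f * h)) ≤ finrank K (LinearMap.ker f) + finrank K (LinearMap.ker h) := by
  have e := LinearMap.finrank_range_add_finrank_ker (h.domRestrict (LinearMap.ker (f * h)))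
  have e1 : LinearMap.range (h.domRestrict (LinearMap.ker (f * h))) ≤ LinearMap.ker f := by
    rintro _ ⟨x, rfl⟩
    exact x.2
  have e2 := Submodule.finrank_mono e1
  have e3 : finrank K (LinearMap.ker (h.domRestrict (LinearMap.ker (f * h)))) ≤
      finrank K (LinearMap.ker h) := by
    rw [← Submodule.finrank_map_subtype_eq]
    apply Submodule.finrank_mono
    rintro _ ⟨x, hx, rfl⟩
    exact hx
  omega

lemma finrank_ker_prod_le {K V : Type*} [Field K] [AddCommGroup V] [Module K V]
    [FiniteDimensional K V] (T : End K V) (d : ℕ)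
    (hd : ∀ a : K, finrank K (LinearMap.ker (T - a • LinearMap.id)) ≤ d) (s : Multiset K) :
    finrank K (LinearMap.ker (aeval T (s.map fun a => X - C a).prod)) ≤ s.card * d := by
  induction s using Multiset.induction_on with
  | empty =>
    rw [Multiset.map_zero, Multiset.prod_zero, map_one, Module.End.one_eq_id, LinearMap.ker_id]
    simp
  | cons a s ih =>
    rw [Multiset.map_cons, Multiset.prod_cons, map_mul, Multiset.card_cons, add_mul, one_mul,
      add_comm]
    refine (finrank_ker_mul_le _ _).trans (add_le_add ?_ ih)
    have h : aeval T (X - C a) = T - a • LinearMap.id := by ext x; simp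
    rw [h]
    exact hd a

lemma finrank_ker_map_ge {F K ι : Type*} [Field F] [Field K] [Algebra F K] [Fintype ι]
    [DecidableEq ι] (A : Matrix ι ι F) :
    finrank F (LinearMap.ker A.mulVecLin) ≤
      finrank K (LinearMap.ker (A.map (algebraMap F K)).mulVecLin) := by
  set k := finrank F (LinearMap.ker A.mulVecLin) with hk
  let e : LinearMap.ker A.mulVecLin ≃ₗ[F] (Fin k → F) :=
    LinearEquiv.ofFinrankEq _ _ (by simp [hk])
  let f : (Fin k → F) →ₗ[F] (ι → F) := (LinearMap.ker A.mulVecLin).subtype ∘ₗ e.symm.toLinearMap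
  have hf : LinearMap.ker f = ⊥ := by
    apply LinearMap.ker_eq_bot.2
    exact (Submodule.injective_subtype _).comp e.symm.injective
  obtain ⟨r, hr⟩ := LinearMap.exists_leftInverse_of_injective f hf
  have h1 : (LinearMap.toMatrix' r) * (LinearMap.toMatrix' f) = 1 := by
    rw [← LinearMap.toMatrix'_comp, hr, LinearMap.toMatrix'_id]
  have h2 : A * LinearMap.toMatrix' f = 0 := by
    have : A.mulVecLin ∘ₗ f = 0 := by
      refine LinearMap.ext fun x => ?_
      exact (e.symm x).2
    have h := congrArg LinearMap.toMatrix' this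
    rw [LinearMap.toMatrix'_comp, map_zero, ← Matrix.toLin'_apply', LinearMap.toMatrix'_toLin'] at h
    exact h
  have h1' := congrArg (fun M => Matrix.map M (algebraMap F K)) h1
  have h2' := congrArg (fun M => Matrix.map M (algebraMap F K)) h2
  simp only [Matrix.map_mul] at h1' h2'
  rw [Matrix.map_one _ (map_zero _) (map_one _)] at h1'
  rw [Matrix.map_zero _ (map_zero _)] at h2'
  let f' : (Fin k → K) →ₗ[K] (ι → K) := ((LinearMap.toMatrix' f).map (algebraMap F K)).mulVecLin
  have hf' : ∀ x, f' x ∈ LinearMap.ker (A.map (algebraMap F K)).mulVecLin := by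
    intro x
    rw [LinearMap.mem_ker]
    simp only [f', Matrix.mulVecLin_apply, Matrix.mulVec_mulVec, h2', Matrix.zero_mulVec]
  have := LinearMap.finrank_le_finrank_of_injective (f := f'.codRestrict _ hf') (by
    intro x y hxy
    have h3 : f' x = f' y := congrArg Subtype.val hxy
    have h4 := congrArg (fun z => ((LinearMap.toMatrix' r).map (algebraMap F K)).mulVec z) h3
    simpa only [f', Matrix.mulVecLin_apply, Matrix.mulVec_mulVec, h1', Matrix.one_mulVec] using h4)
  simpa using this

lemma aeval_mulVecLin {F ι : Type*} [Field F] [Fintype ι] [DecidableEq ι] (A : Matrix ι ι F)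
    (φ : F[X]) : aeval (A.mulVecLin : End F (ι → F)) φ = (aeval A φ).mulVecLin := by
  have := Polynomial.aeval_algHom_apply (Matrix.toLinAlgEquiv' (R := F) (n := ι)).toAlgHom A φ
  exact this

lemma kappa_le_deg_mul {F ι : Type*} [Field F] [Fintype ι] [DecidableEq ι] (A : Matrix ι ι F)
    (φ : F[X]) (hφ : φ ≠ 0) (d : ℕ)
    (hd : ∀ a : AlgebraicClosure F, finrank (AlgebraicClosure F) (LinearMap.ker
      ((A.map (algebraMap F (AlgebraicClosure F))).mulVecLin - a • LinearMap.id)) ≤ d) :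
    finrank F (LinearMap.ker (aeval (A.mulVecLin : End F (ι → F)) φ)) ≤ φ.natDegree * d := by
  rw [aeval_mulVecLin]
  refine (finrank_ker_map_ge (K := AlgebraicClosure F) _).trans ?_
  have h1 : (aeval A φ).map (algebraMap F (AlgebraicClosure F)) =
      aeval (A.map (algebraMap F (AlgebraicClosure F)))
        (φ.map (algebraMap F (AlgebraicClosure F))) := by
    have := Polynomial.aeval_algHom_apply (Algebra.ofId F (AlgebraicClosure F)).mapMatrix A φ
    rw [Polynomial.aeval_map_algebraMap]
    exact this.symm
  rw [h1, ← aeval_mulVecLin]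
  have hs := IsAlgClosed.splits (φ.map (algebraMap F (AlgebraicClosure F)))
  have hfac := hs.eq_prod_roots
  rw [hfac]
  have hl : (φ.map (algebraMap F (AlgebraicClosure F))).leadingCoeff ≠ 0 := by
    rw [Polynomial.leadingCoeff_ne_zero]
    exact (Polynomial.map_ne_zero hφ)
  have := finrank_ker_prod_le
    ((A.map (algebraMap F (AlgebraicClosure F))).mulVecLin :
      End (AlgebraicClosure F) (ι → AlgebraicClosure F)) d hd
    (φ.map (algebraMap F (AlgebraicClosure F))).roots
  rw [← hs.natDegree_eq_card_roots, natDegree_map] at this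
  rw [← smul_eq_C_mul, map_smul, LinearMap.ker_smul _ _ hl]
  exact this

lemma exists_factor_set {F : Type*} [Field F] {N : ℕ} (hN : (N : F) ≠ 0) :
    ∃ S : Finset F[X], (∀ φ ∈ S, Irreducible φ) ∧
      (∀ φ ∈ S, ∀ ψ ∈ S, φ ≠ ψ → IsCoprime φ ψ) ∧ ∏ φ ∈ S, φ = X ^ N - 1 := by
  classical
  have hsep : (X ^ N - 1 : F[X]).Separable := X_pow_sub_one_separable_iff.2 hN
  have hN0 : 0 < N := Nat.pos_of_ne_zero (by rintro rfl; simp at hN)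
  have hmon : (X ^ N - 1 : F[X]).Monic := by
    simpa using monic_X_pow_sub_C (1 : F) hN0.ne'
  have hsq := hsep.squarefree
  have h0 := hmon.ne_zero
  have hnd := (UniqueFactorizationMonoid.squarefree_iff_nodup_normalizedFactors h0).1 hsq
  refine ⟨(UniqueFactorizationMonoid.normalizedFactors (X ^ N - 1 : F[X])).toFinset, ?_, ?_, ?_⟩
  · intro φ h
    exact UniqueFactorizationMonoid.irreducible_of_normalized_factor φ (Multiset.mem_toFinset.1 h)
  · intro φ h ψ h' hne
    rw [Multiset.mem_toFinset] at h h'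
    rw [(UniqueFactorizationMonoid.irreducible_of_normalized_factor φ h).coprime_iff_not_dvd]
    intro hdvd
    have hass := (UniqueFactorizationMonoid.irreducible_of_normalized_factor φ h).associated_of_dvd
      (UniqueFactorizationMonoid.irreducible_of_normalized_factor ψ h') hdvd
    apply hne
    rw [← UniqueFactorizationMonoid.normalize_normalized_factor φ h,
      ← UniqueFactorizationMonoid.normalize_normalized_factor ψ h']
    exact normalize_eq_normalize_iff_associated.2 hass
  · have h1 : (UniqueFactorizationMonoid.normalizedFactors (X ^ N - 1 : F[X])).toFinset.val =
      UniqueFactorizationMonoid.normalizedFactors (X ^ N - 1 : F[X]) := by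
      rw [Multiset.toFinset_val, hnd.dedup]
    rw [Finset.prod_eq_multiset_prod, h1, Multiset.map_id',
      UniqueFactorizationMonoid.prod_normalizedFactors_eq h0]
    exact hmon.normalize_eq_self

end Final

end Helpers

/-- **Lemma 3.1(ii) of Liebeck–Shalev–Tiep (symplectic case).** Let `q = p^f`, `n = 2m`
even, `G = Sp_n(q)`, and `g ∈ G` semisimple (of order prime to `p`) with support
`s = supp(g)` satisfying `n/2 ≤ s < n`. Then `|C_G(g)|_p ≤ q^{(n² − ns)/4}`. -/
theorem centralizer_p_part_bound_large_support (F : Type) [Field F] [Fintype F]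
    (p f : ℕ) (hp : p.Prime) (hf : 0 < f) (hcard : Fintype.card F = p ^ f)
    (m : ℕ) (g : Matrix.symplecticGroup (Fin m) F)
    (hss : Nat.Coprime (orderOf g) p)
    (s : ℕ) (hs : s = matSupp (g : Matrix (Fin m ⊕ Fin m) (Fin m ⊕ Fin m) F))
    (h1 : m ≤ s) (h2 : s < 2 * m) :
    ((p : ℝ) ^ ((Nat.card
        (Subgroup.centralizer {g} : Subgroup (Matrix.symplecticGroup (Fin m) F))).factorization p))
      ≤ (Fintype.card F : ℝ) ^ (((2 * m : ℝ) ^ 2 - (2 * m : ℝ) * s) / 4) := by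
  classical
  have : Fact p.Prime := ⟨hp⟩
  have hq : Nat.card F = p ^ f := by rw [Nat.card_eq_fintype_card, hcard]
  have hpq : p ∣ Nat.card F := by rw [hq]; exact dvd_pow_self p hf.ne'
  have hN : 0 < orderOf g := orderOf_pos g
  have hNF : ((orderOf g : ℕ) : F) ≠ 0 := by
    intro h0
    have hchar : CharP F p := by
      obtain ⟨r, hr⟩ := CharP.exists F
      have hrp : r.Prime := CharP.char_is_prime F r
      obtain ⟨k, -, hk⟩ := FiniteField.card F r
      have : r ∣ p ^ f := by rw [← hcard, hk]; exact dvd_pow_self r k.ne_zero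
      have : r = p := (Nat.prime_dvd_prime_iff_eq hrp hp).1 (hrp.dvd_of_dvd_pow this)
      exact this ▸ hr
    have hdvd : p ∣ orderOf g := (CharP.cast_eq_zero_iff F p _).1 h0
    exact hp.one_lt.ne' (Nat.eq_one_of_dvd_coprimes hss hdvd dvd_rfl)
  obtain ⟨S, hirr, hcop, hprod⟩ := exists_factor_set hNF
  let C := (Subgroup.centralizer {g} : Subgroup (Matrix.symplecticGroup (Fin m) F))
  let P : Sylow p C := default
  let A : Matrix (Fin m ⊕ Fin m) (Fin m ⊕ Fin m) F := g
  let B : LinearMap.BilinForm F (Fin m ⊕ Fin m → F) := Matrix.toBilin' (Matrix.J (Fin m) F)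
  have hBiso : ∀ (h : Matrix.symplecticGroup (Fin m) F) (x y : (Fin m ⊕ Fin m → F)),
      B ((h : Matrix _ _ F).mulVecLin x) ((h : Matrix _ _ F).mulVecLin y) = B x y := by
    intro h x y
    have := SymplecticGroup.mem_iff'.1 h.2
    have h2 := Matrix.toBilin'_comp (Matrix.J (Fin m) F) h.1 h.1
    rw [this] at h2
    exact congrArg (fun T : LinearMap.BilinForm F (Fin m ⊕ Fin m → F) => T x y) h2
  have hBnd : B.Nondegenerate :=
    LinearMap.BilinForm.nondegenerate_toBilin'_of_det_ne_zero' _ (Matrix.isUnit_det_J (Fin m) F).ne_zero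
  have hBR : B.IsRefl := by
    have hneg : ∀ x y, B x y = - B y x := by
      intro x y
      show Matrix.toBilin' _ x y = - Matrix.toBilin' _ y x
      rw [Matrix.toBilin'_apply', Matrix.toBilin'_apply']
      rw [Matrix.dotProduct_mulVec, ← Matrix.mulVec_transpose, Matrix.J_transpose,
        Matrix.neg_mulVec, neg_dotProduct, dotProduct_comm]
    intro x y hxy
    rw [hneg, hxy, neg_zero]
  let ρ : P →* Module.End F (Fin m ⊕ Fin m → F) :=
    { toFun := fun h => ((h : C) : Matrix.symplecticGroup (Fin m) F).1.mulVecLin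
      map_one' := by
        show (1 : Matrix (Fin m ⊕ Fin m) (Fin m ⊕ Fin m) F).mulVecLin = 1
        simp [Module.End.one_eq_id]
      map_mul' := by
        intro a b
        exact Matrix.mulVecLin_mul _ _ }
  have hρinj : Function.Injective ρ := by
    intro a b hab
    have h1 := Matrix.toLin'.injective (show Matrix.toLin' _ = Matrix.toLin' _ from hab)
    exact Subtype.ext (Subtype.ext (Subtype.ext h1))
  have hgN : (A.mulVecLin : Module.End F (Fin m ⊕ Fin m → F)) ^ orderOf g = 1 := by
    have h1 : A ^ orderOf g = 1 := congrArg Subtype.val (pow_orderOf_eq_one g)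
    have h2 := aeval_mulVecLin A (Polynomial.X ^ orderOf g)
    simp only [map_pow, Polynomial.aeval_X, h1] at h2
    rw [h2]; simp [Module.End.one_eq_id]
  have hmain := goodDim_all hpq hN hirr hcop hprod _ (Fin m ⊕ Fin m → F) rfl B hBnd hBR A.mulVecLin hgN
    (hBiso g) P P.isPGroup' ρ hρinj (by
      intro h x
      have h1 := Subgroup.mem_centralizer_iff.1 (h : C).2 g rfl
      have h2 : A * ((h : C) : Matrix.symplecticGroup (Fin m) F).1
        = ((h : C) : Matrix.symplecticGroup (Fin m) F).1 * A := congrArg Subtype.val h1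
      show Matrix.mulVecLin _ (Matrix.mulVecLin _ x) = Matrix.mulVecLin _ (Matrix.mulVecLin _ x)
      simp only [Matrix.mulVecLin_apply, Matrix.mulVec_mulVec]
      rw [← h2]) (fun h => hBiso _)
  -- the largest eigenspace
  set D : (AlgebraicClosure F)ˣ → ℕ := fun x => Module.finrank (AlgebraicClosure F)
        (LinearMap.ker
          ((A.map (algebraMap F (AlgebraicClosure F))).mulVecLin
            - (x : AlgebraicClosure F) • LinearMap.id)) with hD
  have hDle : ∀ x, D x ≤ 2 * m := by
    intro x
    refine (Submodule.finrank_le _).trans ?_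
    simp; omega
  have hbdd : BddAbove (Set.range D) := ⟨2 * m, by rintro _ ⟨x, rfl⟩; exact hDle x⟩
  have hsup : (⨆ x, D x) ≤ 2 * m := ciSup_le hDle
  set d := ⨆ x, D x with hd
  have hsd : s + d = 2 * m := by
    have : s = Fintype.card (Fin m ⊕ Fin m) - d := hs
    simp at this
    omega
  have hAunit : IsUnit A.det := SymplecticGroup.symplectic_det g.2
  have heig : ∀ a : AlgebraicClosure F, Module.finrank (AlgebraicClosure F) (LinearMap.ker
      ((A.map (algebraMap F (AlgebraicClosure F))).mulVecLin - a • LinearMap.id)) ≤ d := by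
    intro a
    by_cases ha : a = 0
    · subst ha
      have hdet : IsUnit (A.map (algebraMap F (AlgebraicClosure F))).det := by
        have := hAunit.map (algebraMap F (AlgebraicClosure F))
        rwa [RingHom.map_det] at this
      have hker : LinearMap.ker ((A.map (algebraMap F (AlgebraicClosure F))).mulVecLin
          - (0 : AlgebraicClosure F) • LinearMap.id) = ⊥ := by
        rw [zero_smul, sub_zero, LinearMap.ker_eq_bot]
        exact Matrix.mulVec_injective_iff_isUnit.2 ((Matrix.isUnit_iff_isUnit_det _).2 hdet)
      rw [hker, finrank_bot]
      exact Nat.zero_le _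
    · exact le_ciSup hbdd (Units.mk0 a ha)
  have hpot : ∑ φ ∈ S, (Module.finrank F (LinearMap.ker
      (Polynomial.aeval (A.mulVecLin : Module.End F (Fin m ⊕ Fin m → F)) φ)) : ℝ) ^ 2 / φ.natDegree
      ≤ 2 * m * d := by
    have h1 : ∀ φ ∈ S, (Module.finrank F (LinearMap.ker
        (Polynomial.aeval (A.mulVecLin : Module.End F (Fin m ⊕ Fin m → F)) φ)) : ℝ) ^ 2 / φ.natDegree
        ≤ (Module.finrank F (LinearMap.ker
        (Polynomial.aeval (A.mulVecLin : Module.End F (Fin m ⊕ Fin m → F)) φ)) : ℝ) * d := by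
      intro φ hφ
      have e0 : (0 : ℝ) < φ.natDegree := by exact_mod_cast (hirr φ hφ).natDegree_pos
      have h2 := kappa_le_deg_mul A φ (hirr φ hφ).ne_zero d heig
      have h3 : (Module.finrank F (LinearMap.ker
        (Polynomial.aeval (A.mulVecLin : Module.End F (Fin m ⊕ Fin m → F)) φ)) : ℝ) ≤ φ.natDegree * d := by
        exact_mod_cast h2
      rw [div_le_iff₀ e0, sq, mul_assoc, mul_comm (d : ℝ)]
      exact mul_le_mul_of_nonneg_left h3 (Nat.cast_nonneg _)
    refine (Finset.sum_le_sum h1).trans ?_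
    rw [← Finset.sum_mul]
    apply mul_le_mul_of_nonneg_right _ (Nat.cast_nonneg _)
    have h4 := (sum_finrank_ker (A.mulVecLin : Module.End F (Fin m ⊕ Fin m → F)) S hcop).trans
      (Submodule.finrank_le _)
    have h5 : Module.finrank F (Fin m ⊕ Fin m → F) = 2 * m := by
      rw [Module.finrank_fintype_fun_eq_card]; simp; omega
    rw [h5] at h4
    exact_mod_cast h4
  have hq1 : (1 : ℝ) < Fintype.card F := by exact_mod_cast Fintype.one_lt_card
  have hPcard : Nat.card P = p ^ (Nat.card C).factorization p := Sylow.card_eq_multiplicity P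
  have hP0 : (0 : ℝ) < p ^ (Nat.card C).factorization p := by
    have := hp.pos
    positivity
  rw [hPcard, Nat.card_eq_fintype_card (α := F), Nat.cast_pow] at hmain
  show (p : ℝ) ^ (Nat.card C).factorization p ≤ _
  rw [← Real.logb_le_iff_le_rpow hq1 hP0]
  have hsd' : (s : ℝ) = 2 * m - d := by
    have : (s : ℝ) + d = 2 * m := by exact_mod_cast hsd
    linarith
  rw [hsd']
  nlinarith

end McKayGraphs
end

section
/- Let q be a prime power, n even, and G = Sp_n(q). For an integer s with 1 ≤ s < n/2, the number of semisimple elements g ∈ G with supp(g) = s is less than 15.2 · q^{s(2n−s+1)/2 + n/2}. -/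
namespace McKayGraphs

open Matrix

/-- Rank factorization with one-sided inverses. -/
lemma rank_factorization {K ι : Type*} [Field K] [Fintype ι] [DecidableEq ι]
    (N : Matrix ι ι K) (s : ℕ) (h : N.rank = s) :
    ∃ (U : Matrix ι (Fin s) K) (C : Matrix (Fin s) ι K) (L : Matrix (Fin s) ι K)
      (R : Matrix ι (Fin s) K), N = U * C ∧ L * U = 1 ∧ C * R = 1 := by
  let f := Matrix.toLin' N
  have hr : Module.finrank K (LinearMap.range f) = s := h
  let e : LinearMap.range f ≃ₗ[K] (Fin s → K) :=
    LinearEquiv.ofFinrankEq _ _ (by simp [hr])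
  let u : (Fin s → K) →ₗ[K] (ι → K) := (LinearMap.range f).subtype ∘ₗ e.symm.toLinearMap
  let c : (ι → K) →ₗ[K] (Fin s → K) := e.toLinearMap ∘ₗ f.rangeRestrict
  have hu : LinearMap.ker u = ⊥ := by
    rw [LinearMap.ker_eq_bot]
    exact (Subtype.val_injective).comp e.symm.injective
  have hc : LinearMap.range c = ⊤ := by
    rw [LinearMap.range_eq_top]
    exact e.surjective.comp f.surjective_rangeRestrict
  obtain ⟨l, hl⟩ := u.exists_leftInverse_of_injective hu
  obtain ⟨r, hr⟩ := c.exists_rightInverse_of_surjective hc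
  refine ⟨LinearMap.toMatrix' u, LinearMap.toMatrix' c, LinearMap.toMatrix' l,
    LinearMap.toMatrix' r, ?_, ?_, ?_⟩
  · rw [← LinearMap.toMatrix'_comp]
    have : u ∘ₗ c = f := by
      refine LinearMap.ext fun x => ?_
      simp [u, c]
    rw [this]; simp [f]
  · rw [← LinearMap.toMatrix'_comp, hl, LinearMap.toMatrix'_id]
  · rw [← LinearMap.toMatrix'_comp, hr, LinearMap.toMatrix'_id]

lemma rank_map_field_s10 {K K' ι : Type*} [Field K] [Field K'] [Fintype ι] [DecidableEq ι]
    (φ : K →+* K') (N : Matrix ι ι K) : (N.map φ).rank = N.rank := by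
  obtain ⟨U, C, L, R, hN, hL, hR⟩ := rank_factorization N _ rfl
  have hL' : L.map φ * U.map φ = 1 := by
    rw [← Matrix.map_mul, hL]; simp
  have hR' : C.map φ * R.map φ = 1 := by
    rw [← Matrix.map_mul, hR]; simp
  have hN' : N.map φ = U.map φ * C.map φ := by rw [← Matrix.map_mul, ← hN]
  apply le_antisymm
  · rw [hN']
    refine (Matrix.rank_mul_le_left _ _).trans ?_
    simpa using Matrix.rank_le_card_width (U.map φ)
  · have h1 : L.map φ * N.map φ * R.map φ = 1 := by
      rw [hN', ← Matrix.mul_assoc, hL', Matrix.one_mul, hR']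
    have h2 := Matrix.rank_mul_le_left (L.map φ * N.map φ) (R.map φ)
    have h3 := Matrix.rank_mul_le_right (L.map φ) (N.map φ)
    rw [h1, Matrix.rank_one, Fintype.card_fin] at h2
    exact h2.trans h3

/-- Wall-form parametrization. -/
lemma wall_form {K : Type*} [Field K] (m s : ℕ)
    (g : Matrix (Fin m ⊕ Fin m) (Fin m ⊕ Fin m) K)
    (hg : g ∈ Matrix.symplecticGroup (Fin m) K) (hs : (g - 1).rank = s) :
    ∃ (U : Matrix (Fin m ⊕ Fin m) (Fin s) K) (L : Matrix (Fin s) (Fin m ⊕ Fin m) K)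
      (X Y : Matrix (Fin s) (Fin s) K), L * U = 1 ∧ Y * X = 1 ∧
      g = 1 - U * Y * (Uᵀ * J (Fin m) K) ∧ X - Xᵀ = Uᵀ * J (Fin m) K * U := by
  obtain ⟨U, C, L, R, hN, hL, hR⟩ := rank_factorization _ _ hs
  set j := J (Fin m) K with hj
  have hjj : j * j = -1 := J_squared _ _
  have hjt : jᵀ = -j := J_transpose _ _
  rw [SymplecticGroup.mem_iff] at hg
  have hg1 : g = 1 + U * C := by rw [← hN]; abel
  have hUt : Uᵀ * Lᵀ = 1 := by rw [← Matrix.transpose_mul, hL, Matrix.transpose_one]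
  -- the basic equation
  have hb : U * (C * j) = -(g * j * Cᵀ * Uᵀ) := by
    have h : g * j * (1 + U * C)ᵀ = j := by rw [← hg1]; exact hg
    rw [Matrix.transpose_add, Matrix.transpose_one, Matrix.transpose_mul, Matrix.mul_add,
      Matrix.mul_one] at h
    nth_rewrite 1 [hg1] at h
    rw [Matrix.add_mul, Matrix.one_mul, add_assoc, add_eq_left] at h
    rw [← Matrix.mul_assoc, Matrix.mul_assoc (g * j)]
    exact eq_neg_of_add_eq_zero_left h
  let Y : Matrix (Fin s) (Fin s) K := -(L * g * j * Cᵀ)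
  have hCj : C * j = Y * Uᵀ := by
    calc C * j = L * U * (C * j) := by rw [hL, Matrix.one_mul]
      _ = L * (U * (C * j)) := by rw [Matrix.mul_assoc]
      _ = Y * Uᵀ := by rw [hb]; simp only [Y, Matrix.mul_neg, Matrix.neg_mul, Matrix.mul_assoc]
  have hC : C = -(Y * (Uᵀ * j)) := by
    calc C = -(C * (j * j)) := by rw [hjj]; simp
      _ = _ := by rw [← Matrix.mul_assoc, hCj, Matrix.mul_assoc]
  let X : Matrix (Fin s) (Fin s) K := -(Uᵀ * j * R)
  have hYX : Y * X = 1 := by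
    have h : Y * X = -(Y * (Uᵀ * j)) * R := by
      simp only [X, Matrix.mul_neg, Matrix.neg_mul, Matrix.mul_assoc]
    rw [h, ← hC, hR]
  have hXY : X * Y = 1 := mul_eq_one_comm.mp hYX
  have hXYt : Yᵀ * Xᵀ = 1 := by rw [← Matrix.transpose_mul, hXY, Matrix.transpose_one]
  have hg2 : g = 1 - U * Y * (Uᵀ * j) := by
    rw [hg1, hC, Matrix.mul_neg, ← Matrix.mul_assoc, sub_eq_add_neg]
  refine ⟨U, L, X, Y, hL, hYX, hg2, ?_⟩
  -- Y Uᵀ = - (L g j Cᵀ Uᵀ)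
  have hCt : j * Cᵀ = -(U * Yᵀ) := by
    have := congrArg Matrix.transpose hCj
    rw [Matrix.transpose_mul, Matrix.transpose_mul, Matrix.transpose_transpose, hjt,
      Matrix.neg_mul] at this
    rw [← this, neg_neg]
  have h3 : Y = (1 - Y * (Uᵀ * j * U)) * Yᵀ := by
    have : L * g = L - Y * (Uᵀ * j) := by
      rw [hg2, Matrix.mul_sub, Matrix.mul_one, ← Matrix.mul_assoc, ← Matrix.mul_assoc L U, hL,
        Matrix.one_mul]
    calc Y = -(L * g * (j * Cᵀ)) := by simp only [Y, Matrix.mul_assoc]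
      _ = L * g * U * Yᵀ := by rw [hCt, Matrix.mul_neg, neg_neg, Matrix.mul_assoc _ U]
      _ = _ := by rw [this, Matrix.sub_mul L, hL, Matrix.mul_assoc Y]
  have h4 : X * Y * Xᵀ = X * ((1 - Y * (Uᵀ * j * U)) * Yᵀ) * Xᵀ := by rw [← h3]
  rw [hXY, Matrix.one_mul, ← Matrix.mul_assoc, Matrix.mul_assoc _ Yᵀ, hXYt, Matrix.mul_one,
    Matrix.mul_sub, Matrix.mul_one, ← Matrix.mul_assoc X Y, hXY, Matrix.one_mul] at h4
  rw [h4]; abel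

lemma card_bound (F : Type) [Field F] [Fintype F] (m s : ℕ) :
    Nat.card {g : Matrix (Fin m ⊕ Fin m) (Fin m ⊕ Fin m) F //
      g ∈ Matrix.symplecticGroup (Fin m) F ∧ (g - 1).rank = s} * Nat.card (GL (Fin s) F) ≤
    Fintype.card F ^ (2 * m * s) * Fintype.card F ^ ((s + 1).choose 2) := by
  classical
  set S := {g : Matrix (Fin m ⊕ Fin m) (Fin m ⊕ Fin m) F //
      g ∈ Matrix.symplecticGroup (Fin m) F ∧ (g - 1).rank = s}
  choose U L X Y hL hYX hg hX using fun g : S => wall_form m s g.1 g.2.1 g.2.2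
  let T := {p : Fin s × Fin s // p.1 ≤ p.2}
  let Φ : S × GL (Fin s) F → Matrix (Fin m ⊕ Fin m) (Fin s) F × (T → F) := fun a =>
    (U a.1 * a.2.1, fun t => ((a.2.1)ᵀ * X a.1 * a.2.1) t.1.1 t.1.2)
  have hΦ : Function.Injective Φ := by
    rintro ⟨g, P⟩ ⟨g', P'⟩ h
    obtain ⟨hU, hT⟩ := Prod.mk.inj h
    dsimp only at hU hT
    have key : ∀ (g : S) (P : GL (Fin s) F),
        (P.1ᵀ * X g * P.1) - (P.1ᵀ * X g * P.1)ᵀ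
          = (U g * P.1)ᵀ * J (Fin m) F * (U g * P.1) := by
      intro g P
      have : (P.1ᵀ * X g * P.1) - (P.1ᵀ * X g * P.1)ᵀ = P.1ᵀ * (X g - (X g)ᵀ) * P.1 := by
        simp only [Matrix.transpose_mul, Matrix.transpose_transpose, Matrix.mul_sub,
          Matrix.sub_mul, Matrix.mul_assoc]
      rw [this, hX]
      simp only [Matrix.transpose_mul, Matrix.mul_assoc]
    have hgf : ∀ (g : S) (P : GL (Fin s) F), ∃ Z, Z * (P.1ᵀ * X g * P.1) = 1 ∧
        g.1 = 1 - (U g * P.1) * Z * ((U g * P.1)ᵀ * J (Fin m) F) := by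
      intro g P
      have hP : P.1 * P⁻¹.1 = 1 := P.mul_inv
      have hP' : P⁻¹.1 * P.1 = 1 := P.inv_mul
      have hPt : (P⁻¹.1)ᵀ * P.1ᵀ = 1 := by rw [← Matrix.transpose_mul, hP, Matrix.transpose_one]
      refine ⟨P⁻¹.1 * Y g * (P⁻¹.1)ᵀ, ?_, ?_⟩
      · calc _ = P⁻¹.1 * (Y g * (((P⁻¹.1)ᵀ * P.1ᵀ) * X g)) * P.1 := by
              simp only [Matrix.mul_assoc]
          _ = 1 := by rw [hPt, Matrix.one_mul, hYX, Matrix.mul_one, hP']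
      · have : (U g * P.1) * (P⁻¹.1 * Y g * (P⁻¹.1)ᵀ) * ((U g * P.1)ᵀ * J (Fin m) F)
            = U g * ((P.1 * P⁻¹.1) * Y g) * (((P⁻¹.1)ᵀ * P.1ᵀ) * (U g)ᵀ * J (Fin m) F) := by
          simp only [Matrix.transpose_mul, Matrix.mul_assoc]
        rw [this, hP, hPt, Matrix.one_mul, Matrix.one_mul]
        exact hg g
    have hXX : P.1ᵀ * X g * P.1 = P'.1ᵀ * X g' * P'.1 := by
      have k1 := key g P
      have k2 := key g' P'
      rw [hU, ← k2] at k1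
      ext i j
      rcases le_total i j with hij | hij
      · exact congrFun hT ⟨(i, j), hij⟩
      · have e1 := congrFun hT ⟨(j, i), hij⟩
        have e2 := congrFun (congrFun k1 i) j
        simp only [Matrix.sub_apply, Matrix.transpose_apply] at e2
        dsimp only at e1
        rw [e1] at e2
        exact sub_left_injective e2
    obtain ⟨Z, hZ, hgZ⟩ := hgf g P
    obtain ⟨Z', hZ', hgZ'⟩ := hgf g' P'
    have hZZ : Z = Z' := by
      rw [hXX] at hZ
      exact left_inv_eq_right_inv hZ (mul_eq_one_comm.mp hZ')
    have hgg : g = g' := by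
      apply Subtype.ext
      rw [hgZ, hgZ', hU, hZZ]
    subst hgg
    have hPP : P.1 = P'.1 := by
      have := congrArg (fun M => L g * M) hU
      simpa only [← Matrix.mul_assoc, hL, Matrix.one_mul] using this
    rw [Units.ext hPP]
  have hc := Nat.card_le_card_of_injective Φ hΦ
  rw [Nat.card_prod, Nat.card_prod] at hc
  refine hc.trans (le_of_eq ?_)
  congr 1
  · simp [Nat.card_eq_fintype_card, Matrix, ← pow_mul]; ring_nf
  · rw [Nat.card_eq_fintype_card, Fintype.card_fun, ← Fintype.card_congr (Sym2.sortEquiv (α := Fin s)), Sym2.card,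
      Fintype.card_fin]

lemma GL_lower (F : Type) [Field F] [Fintype F] (s : ℕ) :
    Fintype.card F ^ (s * (s - 1)) ≤ Nat.card (GL (Fin s) F) := by
  rw [Matrix.card_GL_field, mul_comm, pow_mul]
  have hq : 2 ≤ Fintype.card F := Fintype.one_lt_card
  calc (Fintype.card F ^ (s - 1)) ^ s = ∏ i : Fin s, Fintype.card F ^ (s - 1) := by simp
    _ ≤ _ := Finset.prod_le_prod' fun i _ => by
      have h1 : Fintype.card F ^ (i : ℕ) ≤ Fintype.card F ^ (s - 1) :=
        Nat.pow_le_pow_right (by omega) (by omega)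
      have h2 : Fintype.card F ^ s = Fintype.card F ^ (s - 1) * Fintype.card F := by
        rw [← pow_succ]; congr 1; have := i.2; omega
      have h3 : Fintype.card F ^ (s - 1) * 2 ≤ Fintype.card F ^ (s - 1) * Fintype.card F :=
        Nat.mul_le_mul_left _ hq
      omega

lemma finrank_ker_add_rank {K ι : Type*} [Field K] [Fintype ι] [DecidableEq ι]
    (N : Matrix ι ι K) :
    N.rank + Module.finrank K (LinearMap.ker N.mulVecLin) = Fintype.card ι := by
  have := LinearMap.finrank_range_add_finrank_ker N.mulVecLin
  rwa [Module.finrank_fintype_fun_eq_card] at this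

/-- An eigenspace of dimension more than half belongs to the eigenvalue `1` or `-1`. -/
lemma eigenvalue_sq {K : Type*} [Field K] (m : ℕ)
    (g : Matrix (Fin m ⊕ Fin m) (Fin m ⊕ Fin m) K)
    (hg : g ∈ Matrix.symplecticGroup (Fin m) K) (x : K) (hx : x ≠ 0)
    (hd : (g - x • (1 : Matrix _ _ K)).rank < m) : x = 1 ∨ x = -1 := by
  by_contra hne
  have hxx : x * x ≠ 1 := fun h => hne (mul_self_eq_one_iff.mp h)
  set j := J (Fin m) K with hj
  have hjj : j * j = -1 := J_squared _ _
  have hju : IsUnit j.det := isUnit_det_J _ _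
  have hgu : IsUnit g.det := SymplecticGroup.symplectic_det hg
  rw [SymplecticGroup.mem_iff] at hg
  -- the eigenspaces for `x` and `x⁻¹` have the same dimension
  have e1 : g * j * (g - x • (1 : Matrix _ _ K))ᵀ = (-x) • ((g - x⁻¹ • (1 : Matrix _ _ K)) * j) := by
    rw [Matrix.transpose_sub, Matrix.mul_sub, hg, Matrix.transpose_smul, Matrix.transpose_one,
      Matrix.mul_smul, Matrix.mul_one, Matrix.sub_mul, Matrix.smul_mul, Matrix.one_mul, smul_sub,
      smul_smul]
    simp [hx]
    abel
  have hr : (g - x⁻¹ • (1 : Matrix _ _ K)).rank ≤ (g - x • (1 : Matrix _ _ K)).rank := by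
    have e2 : g - x⁻¹ • (1 : Matrix _ _ K) =
        (g * j) * ((g - x • (1 : Matrix _ _ K))ᵀ * (x⁻¹ • j)) := by
      rw [← Matrix.mul_assoc, e1, Matrix.smul_mul, Matrix.mul_smul, Matrix.mul_assoc, hjj,
        smul_smul]
      simp [hx]
    calc _ ≤ ((g - x • (1 : Matrix _ _ K))ᵀ * (x⁻¹ • j)).rank := by
          rw [e2]; exact Matrix.rank_mul_le_right _ _
      _ ≤ ((g - x • (1 : Matrix _ _ K))ᵀ).rank := Matrix.rank_mul_le_left _ _
      _ = _ := Matrix.rank_transpose _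
  have k1 := finrank_ker_add_rank (g - x • (1 : Matrix _ _ K))
  have k2 := finrank_ker_add_rank (g - x⁻¹ • (1 : Matrix _ _ K))
  have hdisj : Disjoint (LinearMap.ker (g - x • (1 : Matrix _ _ K)).mulVecLin)
      (LinearMap.ker (g - x⁻¹ • (1 : Matrix _ _ K)).mulVecLin) := by
    rw [Submodule.disjoint_def]
    intro v h1 h2
    simp only [LinearMap.mem_ker, Matrix.mulVecLin_apply, Matrix.sub_mulVec, Matrix.smul_mulVec,
      Matrix.one_mulVec, sub_eq_zero] at h1 h2
    rw [h1] at h2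
    have h3 : (x - x⁻¹) • v = 0 := by rw [sub_smul, h2, sub_self]
    rcases smul_eq_zero.mp h3 with h | h
    · exfalso
      apply hxx
      rw [sub_eq_zero] at h
      nth_rewrite 2 [h]
      exact mul_inv_cancel₀ hx
    · exact h
  have := Submodule.finrank_add_finrank_le_of_disjoint hdisj
  rw [Module.finrank_fintype_fun_eq_card] at this
  simp only [Fintype.card_sum, Fintype.card_fin] at *
  omega

lemma rank_of_matSupp {F : Type} [Field F] (m s : ℕ) (h1 : 1 ≤ s) (h2 : s < m)
    (g : Matrix (Fin m ⊕ Fin m) (Fin m ⊕ Fin m) F)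
    (hg : g ∈ Matrix.symplecticGroup (Fin m) F) (hs : matSupp g = s) :
    (g - 1).rank = s ∨ (-g - 1).rank = s := by
  set φ := algebraMap F (AlgebraicClosure F) with hφ
  let d : (AlgebraicClosure F)ˣ → ℕ := fun x => Module.finrank (AlgebraicClosure F)
        (LinearMap.ker ((g.map φ).mulVecLin - (x : AlgebraicClosure F) • LinearMap.id))
  have hs' : Fintype.card (Fin m ⊕ Fin m) - ⨆ x, d x = s := hs
  have hmem : (⨆ x, d x) ∈ Set.range d := by
    refine Nat.sSup_mem (Set.range_nonempty d) ⟨Fintype.card (Fin m ⊕ Fin m), ?_⟩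
    rintro _ ⟨x, rfl⟩
    refine (Submodule.finrank_le _).trans ?_
    rw [Module.finrank_fintype_fun_eq_card]
  obtain ⟨x, hx⟩ := hmem
  rw [← hx] at hs'
  have hlin : (g.map φ).mulVecLin - (x : AlgebraicClosure F) • LinearMap.id
      = (g.map φ - (x : AlgebraicClosure F) • (1 : Matrix _ _ _)).mulVecLin := by
    refine LinearMap.ext fun v => ?_
    simp [Matrix.sub_mulVec, Matrix.smul_mulVec]
  have hrk : (g.map φ - (x : AlgebraicClosure F) • (1 : Matrix _ _ _)).rank = s := by
    have := finrank_ker_add_rank (g.map φ - (x : AlgebraicClosure F) • (1 : Matrix _ _ _))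
    rw [← hlin] at this
    change _ + d x = _ at this
    omega
  rcases eigenvalue_sq m (g.map φ) (SymplecticGroup.map_mem hg φ) x x.ne_zero
    (hrk ▸ h2) with h | h
  · left
    rw [← rank_map_field_s10 φ, ← hrk, h]
    congr 1
    rw [Matrix.map_sub]
    · simp
    · simp
  · right
    rw [← rank_map_field_s10 φ, ← hrk, h]
    have : (-g - 1).map φ = -(g.map φ - (-1 : AlgebraicClosure F) • (1 : Matrix _ _ _)) := by
      rw [Matrix.map_sub, Matrix.map_neg]
      · simp; abel
      · simp
      · simp
    rw [this]
    simp only [Matrix.rank]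
    rw [show ∀ M : Matrix (Fin m ⊕ Fin m) (Fin m ⊕ Fin m) (AlgebraicClosure F),
      (-M).mulVecLin = -M.mulVecLin from fun M => by
        refine LinearMap.ext fun v => ?_
        simp [Matrix.neg_mulVec], LinearMap.range_neg]

/-- **Lemma 3.1(iv) of Liebeck–Shalev–Tiep (symplectic case).** Let `q = p^f`, `n = 2m`
even, `G = Sp_n(q)`, and `1 ≤ s < n/2`. The number of semisimple elements `g ∈ G`
(of order prime to `p`) with `supp(g) = s` is less than
`15.2 · q^{s(2n−s+1)/2 + n/2}`. -/
theorem card_semisimple_support_eq_bound (F : Type) [Field F] [Fintype F]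
    (p f : ℕ) (hp : p.Prime) (hf : 0 < f) (hcard : Fintype.card F = p ^ f)
    (m : ℕ) (s : ℕ) (h1 : 1 ≤ s) (h2 : s < m) :
    (Nat.card {g : Matrix.symplecticGroup (Fin m) F //
        Nat.Coprime (orderOf g) p ∧
        matSupp (g : Matrix (Fin m ⊕ Fin m) (Fin m ⊕ Fin m) F) = s} : ℝ) <
      15.2 * (Fintype.card F : ℝ) ^
        ((s : ℝ) * (2 * (2 * m : ℝ) - s + 1) / 2 + (2 * m : ℝ) / 2) := by
  set q := Fintype.card F with hq
  have hq2 : 2 ≤ q := Fintype.one_lt_card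
  let S := {g : Matrix (Fin m ⊕ Fin m) (Fin m ⊕ Fin m) F //
      g ∈ Matrix.symplecticGroup (Fin m) F ∧ (g - 1).rank = s}
  set A := {g : Matrix.symplecticGroup (Fin m) F //
        Nat.Coprime (orderOf g) p ∧
        matSupp (g : Matrix (Fin m ⊕ Fin m) (Fin m ⊕ Fin m) F) = s}
  have hA : Nat.card A ≤ Nat.card S + Nat.card S := by
    classical
    rw [← Nat.card_sum]
    have hor : ∀ a : A, ¬ ((a.1 : Matrix (Fin m ⊕ Fin m) (Fin m ⊕ Fin m) F) - 1).rank = s →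
        (-(a.1 : Matrix (Fin m ⊕ Fin m) (Fin m ⊕ Fin m) F) - 1).rank = s := fun a h =>
      (rank_of_matSupp m s h1 h2 a.1.1 a.1.2 a.2.2).resolve_left h
    let Ψ : A → S ⊕ S := fun a =>
      if h : ((a.1 : Matrix (Fin m ⊕ Fin m) (Fin m ⊕ Fin m) F) - 1).rank = s then
        Sum.inl ⟨a.1.1, a.1.2, h⟩
      else Sum.inr ⟨-a.1.1, SymplecticGroup.neg_mem a.1.2, hor a h⟩
    refine Nat.card_le_card_of_injective Ψ ?_
    intro a b hab
    apply Subtype.ext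
    apply Subtype.ext
    simp only [Ψ] at hab
    split_ifs at hab with ha hb hb
    · have h := Sum.inl.inj hab
      exact congrArg (fun z : S => z.1) h
    · have h := Sum.inr.inj hab
      exact neg_injective (congrArg (fun z : S => z.1) h)
  have hS : Nat.card S * q ^ (s * (s - 1)) ≤ q ^ (2 * m * s + (s + 1).choose 2) := by
    rw [pow_add]
    exact (Nat.mul_le_mul_left _ (GL_lower F s)).trans (card_bound F m s)
  have hqpos : (0 : ℝ) < q := by exact_mod_cast (by omega : 0 < q)
  have hq1 : (1 : ℝ) ≤ q := by exact_mod_cast (by omega : 1 ≤ q)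
  have hchoose : (((s + 1).choose 2 : ℕ) : ℝ) = (s + 1) * s / 2 := by
    rw [Nat.cast_choose_two]; push_cast; ring
  have hS' : (Nat.card S : ℝ) ≤ (q : ℝ) ^
      ((s : ℝ) * (2 * (2 * m : ℝ) - s + 1) / 2 + (2 * m : ℝ) / 2) := by
    have h3 : (Nat.card S : ℝ) * (q : ℝ) ^ (s * (s - 1)) ≤
        (q : ℝ) ^ (2 * m * s + (s + 1).choose 2) := by exact_mod_cast hS
    rw [← Real.rpow_natCast, ← Real.rpow_natCast, ← le_div_iff₀ (by positivity),
      ← Real.rpow_sub hqpos] at h3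
    refine h3.trans (Real.rpow_le_rpow_of_exponent_le hq1 ?_)
    have hsm : (s : ℝ) ≤ m := by exact_mod_cast h2.le
    push_cast [hchoose, Nat.cast_sub h1]
    nlinarith
  have hpos : (0 : ℝ) < (q : ℝ) ^
      ((s : ℝ) * (2 * (2 * m : ℝ) - s + 1) / 2 + (2 * m : ℝ) / 2) := Real.rpow_pos_of_pos hqpos _
  have hA' : (Nat.card A : ℝ) ≤ Nat.card S + Nat.card S := by exact_mod_cast hA
  linarith

end McKayGraphs
end
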